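/- Let 0 < s < 1/2 and let the collision kernel b satisfy b(cos θ)·θ^{2+2s} → K as θ → 0+ for some K > 0. Let F₀ be a Borel probability measure on ℝ³ which is not a single Dirac mass and which has finite first moment ∫_{ℝ³} |v| dF₀(v) < ∞, let ψ₀ be its characteristic function, and let ψ be a solution of the Fourier-transformed (Bobylev) homogeneous Boltzmann Cauchy problem with initial datum ψ₀, with t ↦ ψ(t,·) continuous into 𝒦¹. Then for EVERY t > 0 and every N ∈ ℕ one has ∫_{ℝ³} (1+|ξ|²)^N |ψ(t,ξ)|² dξ < ∞ (global-in-time H^∞ smoothing). -/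

import Mathlib

/-!
For a solution `ψ`, the function `φ = |ψ|²` is a real characteristic function and a subsolution of
the Bobylev equation. If `φ_t < 1` at one point, then `φ_t < 1` away from the origin, hence
`1 - φ ≥ δ|ξ|²` near the origin at times close to `t`. Grazing collisions then dissipate at a rate
of order `|ξ|^{2s}`, and comparison at a first touching point with barriers
`exp (-a ((1 + |ξ|²)^s - 1))` gives decay faster than any polynomial.

It remains to show that `φ_t` cannot become identically `1`. If the momentum transfer cross section
is finite, a barrier `κ e^{-βt} |ξ|²` for `1 - φ` does this. If it is infinite, integrability of the
collision integrand forces the averaged collision defect of `-log φ_t` to be small; comparing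
`-log φ_t` with quadratic forms given by truncated covariances shows that it equals `V|ξ|²` near the
origin. The collision integral vanishes on Gaussians, so there `φ_t` is nonincreasing in time.
-/

noncomputable section

open MeasureTheory Real Filter Metric Set
open scoped RealInnerProductSpace Topology

/-- ℝ³ as a Euclidean space. -/
abbrev E3 : Type := EuclideanSpace ℝ (Fin 3)

/-- The surface measure on the unit sphere S² ⊂ ℝ³. -/
def sphμ : Measure (sphere (0 : E3) 1) := (volume : Measure E3).toSphere

/-- The characteristic function (Fourier transform) of a Borel measure on ℝ³,
`ψ(ξ) = ∫ e^{-i v·ξ} dΨ(v)`. -/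
def charFn (Ψ : Measure E3) (ξ : E3) : ℂ :=
  ∫ v, Complex.exp (-(Complex.I * (⟪v, ξ⟫ : ℂ))) ∂Ψ

/-- `ψ` is a characteristic function of some Borel probability measure on ℝ³. -/
def IsCharFn (ψ : E3 → ℂ) : Prop :=
  ∃ Ψ : Measure E3, IsProbabilityMeasure Ψ ∧ ψ = charFn Ψ

/-- Finiteness of `‖φ - 1‖_α`, i.e. the quantitative part of membership in `𝒦^α`. -/
def KBdd (α : ℝ) (φ : E3 → ℂ) : Prop :=
  ∃ C : ℝ, ∀ ξ : E3, ξ ≠ 0 → ‖φ ξ - 1‖ ≤ C * ‖ξ‖ ^ α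

/-- Membership in the space `𝒦^α`. -/
def memK (α : ℝ) (φ : E3 → ℂ) : Prop := IsCharFn φ ∧ KBdd α φ

/-- The distance `‖φ - φ'‖_α = sup_{ξ ≠ 0} |φ(ξ) - φ'(ξ)|/|ξ|^α` on `𝒦^α`. -/
def Kdist (α : ℝ) (φ φ' : E3 → ℂ) : ℝ :=
  ⨆ ξ : {ξ : E3 // ξ ≠ 0}, ‖φ ξ.1 - φ' ξ.1‖ / ‖(ξ.1 : E3)‖ ^ α

/-- `ξ⁺ = ξ/2 + (|ξ|/2)σ`. -/
def xiPlus (ξ : E3) (σ : sphere (0 : E3) 1) : E3 := (1/2 : ℝ) • ξ + (‖ξ‖ / 2) • (σ : E3)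

/-- `ξ⁻ = ξ/2 - (|ξ|/2)σ`. -/
def xiMinus (ξ : E3) (σ : sphere (0 : E3) 1) : E3 := (1/2 : ℝ) • ξ - (‖ξ‖ / 2) • (σ : E3)

/-- The Bobylev collision integrand at time `t`, frequency `ξ`, direction `σ`. -/
def bobylevIntegrand (b : ℝ → ℝ) (ψ : ℝ → E3 → ℂ) (t : ℝ) (ξ : E3)
    (σ : sphere (0 : E3) 1) : ℂ :=
  (b (⟪ξ, (σ : E3)⟫ / ‖ξ‖) : ℂ) *
    (ψ t (xiPlus ξ σ) * ψ t (xiMinus ξ σ) - ψ t ξ)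

/-- `ψ : [0,∞) × ℝ³ → ℂ` is a solution of the Fourier-transformed (Bobylev)
homogeneous Boltzmann Cauchy problem with collision kernel `b` and initial datum `ψ₀`. -/
structure IsBobylevSolution (b : ℝ → ℝ) (ψ : ℝ → E3 → ℂ) (ψ₀ : E3 → ℂ) : Prop where
  cont : ContinuousOn (fun p : ℝ × E3 => ψ p.1 p.2) (Set.Ici 0 ×ˢ Set.univ)
  init : ψ 0 = ψ₀
  isCharFn : ∀ t ≥ 0, IsCharFn (ψ t)
  integrable : ∀ t ≥ 0, ∀ ξ : E3, Integrable (bobylevIntegrand b ψ t ξ) sphμ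
  eq : ∀ t ≥ 0, ∀ ξ : E3, HasDerivWithinAt (fun τ => ψ τ ξ)
      (∫ σ, bobylevIntegrand b ψ t ξ σ ∂sphμ) (Set.Ici 0) t

/-- Continuity of `t ↦ ψ(t,·)` from `[0,∞)` into the metric space `(𝒦^α, ‖·‖_α)`. -/
def KContinuous (α : ℝ) (ψ : ℝ → E3 → ℂ) : Prop :=
  ∀ t₀ ∈ Set.Ici (0:ℝ), Tendsto (fun t => Kdist α (ψ t) (ψ t₀)) (𝓝[Set.Ici (0:ℝ)] t₀) (𝓝 0)

/-- The angular singularity assumption `b(cos θ) θ^{2+2s} → K` as `θ → 0+`. -/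
def KernelSingular (b : ℝ → ℝ) (s K : ℝ) : Prop :=
  Tendsto (fun θ : ℝ => b (Real.cos θ) * θ ^ (2 + 2*s)) (𝓝[>] 0) (𝓝 K)

section CosTransform

variable {E : Type*} [NormedAddCommGroup E] [InnerProductSpace ℝ E] [MeasurableSpace E]

/-- The cosine transform of a measure, i.e. the real part of its characteristic function. -/
def cosTransform (μ : Measure E) (ξ : E) : ℝ := ∫ u, cos ⟪u, ξ⟫ ∂μ

/-- `φ` is the cosine transform of a probability measure, i.e. a real-valued characteristic
function. -/
def IsCosTransform (φ : E → ℝ) : Prop :=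
  ∃ μ : Measure E, IsProbabilityMeasure μ ∧ φ = cosTransform μ

lemma IsCosTransform.map_zero {φ : E → ℝ} (hφ : IsCosTransform φ) : φ 0 = 1 := by
  obtain ⟨μ, hμ, rfl⟩ := hφ
  simp [cosTransform]

variable [OpensMeasurableSpace E] {μ : Measure E} [IsProbabilityMeasure μ] {φ : E → ℝ}

lemma integrable_cos_inner (ξ : E) : Integrable (fun u => cos ⟪u, ξ⟫) μ :=
  .of_bound (C := 1) (by fun_prop) (ae_of_all _ fun _ => abs_cos_le_one _)

lemma integrable_one_sub_cos_inner (ξ : E) : Integrable (fun u => 1 - cos ⟪u, ξ⟫) μ :=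
  (integrable_const 1).sub (integrable_cos_inner ξ)

lemma one_sub_cosTransform (ξ : E) : 1 - cosTransform μ ξ = ∫ u, (1 - cos ⟪u, ξ⟫) ∂μ := by
  rw [integral_sub (integrable_const 1) (integrable_cos_inner ξ), cosTransform]
  simp

namespace IsCosTransform

lemma le_one (hφ : IsCosTransform φ) (ξ : E) : φ ξ ≤ 1 := by
  obtain ⟨μ, hμ, rfl⟩ := hφ
  rw [← sub_nonneg, one_sub_cosTransform]
  exact integral_nonneg fun u => sub_nonneg.2 (cos_le_one _)

lemma continuous (hφ : IsCosTransform φ) : Continuous φ := by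
  obtain ⟨μ, hμ, rfl⟩ := hφ
  exact continuous_of_dominated (bound := fun _ => 1)
    (fun ξ => (integrable_cos_inner ξ).aestronglyMeasurable)
    (fun ξ => ae_of_all _ fun _ => abs_cos_le_one _) (integrable_const 1)
    (ae_of_all _ fun u => by fun_prop)

lemma parallelogram_le (hφ : IsCosTransform φ) (a c : E) :
    (1 - φ (a + c)) + (1 - φ (a - c)) ≤ 2 * (1 - φ a) + 2 * (1 - φ c) := by
  obtain ⟨μ, hμ, rfl⟩ := hφ
  have hint (ξ : E) : Integrable (fun u => 1 - cos ⟪u, ξ⟫) μ := integrable_one_sub_cos_inner ξ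
  simp only [one_sub_cosTransform, ← integral_const_mul]
  rw [← integral_add (hint _) (hint _),
    ← integral_add ((hint _).const_mul 2) ((hint _).const_mul 2)]
  refine integral_mono ((hint _).add (hint _)) (((hint _).const_mul 2).add ((hint _).const_mul 2))
    fun u => ?_
  simp only [inner_add_right, inner_sub_right, cos_add, cos_sub]
  nlinarith [mul_nonneg (sub_nonneg.2 (cos_le_one ⟪u, a⟫)) (sub_nonneg.2 (cos_le_one ⟪u, c⟫))]

lemma one_sub_two_smul_le (hφ : IsCosTransform φ) (a : E) :
    1 - φ ((2 : ℝ) • a) ≤ 4 * (1 - φ a) := by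
  have h := hφ.parallelogram_le a a
  rw [sub_self, hφ.map_zero, ← two_smul ℝ a] at h
  linarith

lemma add_eq_one (hφ : IsCosTransform φ) {a c : E} (ha : φ a = 1) (hc : φ c = 1) :
    φ (a + c) = 1 := by
  linarith [hφ.parallelogram_le a c, hφ.le_one (a + c), hφ.le_one (a - c)]

lemma sub_eq_one (hφ : IsCosTransform φ) {a c : E} (ha : φ a = 1) (hc : φ c = 1) :
    φ (a - c) = 1 := by
  linarith [hφ.parallelogram_le a c, hφ.le_one (a + c), hφ.le_one (a - c)]

lemma nsmul_eq_one (hφ : IsCosTransform φ) {a : E} (ha : φ a = 1) (n : ℕ) : φ (n • a) = 1 := by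
  induction n with
  | zero => simpa using hφ.map_zero
  | succ n ih => rw [succ_nsmul]; exact hφ.add_eq_one ih ha

lemma eq_one_of_ball (hφ : IsCosTransform φ) {ρ : ℝ} (hρ : 0 < ρ)
    (h : ∀ ξ, ‖ξ‖ < ρ → φ ξ = 1) (ξ : E) : φ ξ = 1 := by
  obtain ⟨n, hn⟩ := exists_nat_gt (‖ξ‖ / ρ)
  have hn0 : (0 : ℝ) < n := lt_of_le_of_lt (by positivity) hn
  have hsmall : ‖(n : ℝ)⁻¹ • ξ‖ < ρ := by
    rw [norm_smul, norm_inv, Real.norm_natCast, inv_mul_lt_iff₀ hn0]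
    exact (div_lt_iff₀ hρ).1 hn
  have hmul : n • ((n : ℝ)⁻¹ • ξ) = ξ := by
    rw [← Nat.cast_smul_eq_nsmul ℝ, smul_inv_smul₀ hn0.ne']
  exact hmul ▸ hφ.nsmul_eq_one (h _ hsmall) n

-- Each doubling of the argument multiplies both sides of the bound by at most `4`.
lemma le_one_sub_of_annulus (hφ : IsCosTransform φ) {r κ : ℝ} (hr : 0 < r)
    (h : ∀ ξ, r / 2 ≤ ‖ξ‖ → ‖ξ‖ ≤ r → κ * ‖ξ‖ ^ 2 ≤ 1 - φ ξ) {ξ : E} (hξ : ‖ξ‖ ≤ r) :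
    κ * ‖ξ‖ ^ 2 ≤ 1 - φ ξ := by
  rcases eq_or_ne ξ 0 with rfl | hξ0
  · simp [hφ.map_zero]
  have hdyadic (n : ℕ) : ∀ ξ : E, ‖ξ‖ ≤ r → r / 2 ^ (n + 1) ≤ ‖ξ‖ → κ * ‖ξ‖ ^ 2 ≤ 1 - φ ξ := by
    induction n with
    | zero => exact fun ξ hle hge => h ξ (by simpa using hge) hle
    | succ n ih =>
      intro ξ hle hge
      rcases le_or_gt (r / 2) ‖ξ‖ with hhalf | hhalf
      · exact h ξ hhalf hle
      have hnorm : ‖(2 : ℝ) • ξ‖ = 2 * ‖ξ‖ := by simp [norm_smul]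
      have hge_two : r / 2 ^ (n + 1) ≤ 2 * ‖ξ‖ := by
        rw [pow_succ, ← div_div, div_le_iff₀ two_pos] at hge
        linarith
      have hbound := ih ((2 : ℝ) • ξ) (by linarith) (by rwa [hnorm])
      rw [hnorm] at hbound
      linarith [hφ.one_sub_two_smul_le ξ]
  obtain ⟨n, hn⟩ := pow_unbounded_of_one_lt (r / ‖ξ‖) one_lt_two
  have hpos : 0 < ‖ξ‖ := norm_pos_iff.2 hξ0
  refine hdyadic n ξ hξ ?_
  rw [div_lt_iff₀ hpos] at hn
  rw [div_le_iff₀ (by positivity), pow_succ]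
  nlinarith [pow_pos (two_pos (α := ℝ)) n]

end IsCosTransform

end CosTransform

lemma sq_div_two_sub_pow_four_le_one_sub_cos (x : ℝ) : x ^ 2 / 2 - x ^ 4 ≤ 1 - cos x := by
  rcases le_or_gt |x| 1 with hx | hx
  · have hcos := (abs_le.1 (cos_bound hx)).2
    rw [Even.pow_abs (by decide)] at hcos
    nlinarith [pow_nonneg (sq_nonneg x) 2]
  · have : 1 < x ^ 2 := (one_lt_sq_iff_one_lt_abs x).2 hx
    nlinarith [cos_le_one x]

lemma integrableOn_closedBall_of_continuous {X : Type*} [MetricSpace X] [ProperSpace X]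
    [MeasurableSpace X] [OpensMeasurableSpace X] {μ : Measure X} [IsFiniteMeasureOnCompacts μ]
    {f : X → ℝ} (hf : Continuous f) (x : X) (M : ℝ) : IntegrableOn f (closedBall x M) μ :=
  hf.continuousOn.integrableOn_compact (isCompact_closedBall x M)

/-- Half the trace of the covariance of `μ` truncated to the ball of radius `M`; it is the trace
of the quadratic form `truncForm μ M` below. -/
def truncTrace {E : Type*} [NormedAddCommGroup E] [MeasurableSpace E] (μ : Measure E) (M : ℝ) : ℝ :=
  1 / 2 * ∫ u in closedBall 0 M, ‖u‖ ^ 2 ∂μ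

lemma truncTrace_mono {E : Type*} [NormedAddCommGroup E] [MeasurableSpace E]
    [OpensMeasurableSpace E] [ProperSpace E] {μ : Measure E} [IsFiniteMeasureOnCompacts μ]
    {M M' : ℝ} (h : M ≤ M') : truncTrace μ M ≤ truncTrace μ M' :=
  mul_le_mul_of_nonneg_left (setIntegral_mono_set
    (integrableOn_closedBall_of_continuous (by fun_prop) 0 M') (ae_of_all _ fun u => sq_nonneg ‖u‖)
    (closedBall_subset_closedBall h).eventuallyLE) (by norm_num)

section TruncatedForm

variable {E : Type*} [NormedAddCommGroup E] [InnerProductSpace ℝ E] [MeasurableSpace E]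

/-- The covariance form of `μ` truncated to the ball of radius `M`, normalised so that its
limit as `M → ∞` is the second-order Taylor term of `1 - cosTransform μ` at the origin. -/
def truncForm (μ : Measure E) (M : ℝ) (x : E) : ℝ := 1 / 2 * ∫ u in closedBall 0 M, ⟪u, x⟫ ^ 2 ∂μ

lemma truncForm_smul (μ : Measure E) (M c : ℝ) (x : E) :
    truncForm μ M (c • x) = c ^ 2 * truncForm μ M x := by
  simp only [truncForm, inner_smul_right, mul_pow, integral_const_mul]
  ring

variable [OpensMeasurableSpace E] [ProperSpace E] {μ : Measure E} [IsProbabilityMeasure μ]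

lemma integrableOn_closedBall_inner_sq (M : ℝ) (x : E) :
    IntegrableOn (fun u => ⟪u, x⟫ ^ 2) (closedBall 0 M) μ :=
  integrableOn_closedBall_of_continuous (by fun_prop) 0 M

lemma continuous_truncForm (M : ℝ) : Continuous (truncForm μ M) :=
  continuous_const.mul (continuous_parametric_integral_of_continuous (by fun_prop)
    (isCompact_closedBall 0 M))

lemma truncForm_add_add_truncForm_sub (M : ℝ) (x z : E) :
    truncForm μ M (x + z) + truncForm μ M (x - z) = 2 * truncForm μ M x + 2 * truncForm μ M z := by
  have hint (y : E) := integrableOn_closedBall_inner_sq (μ := μ) M y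
  have hsum := integral_add (hint (x + z)) (hint (x - z))
  have hsum' := integral_add ((hint x).const_mul 2) ((hint z).const_mul 2)
  have hpoint (u : E) : ⟪u, x + z⟫ ^ 2 + ⟪u, x - z⟫ ^ 2 = 2 * ⟪u, x⟫ ^ 2 + 2 * ⟪u, z⟫ ^ 2 := by
    rw [inner_add_right, inner_sub_right]
    ring
  simp only [hpoint] at hsum
  simp only [integral_const_mul] at hsum'
  unfold truncForm
  linarith

lemma truncForm_sub_le_one_sub_cosTransform (M : ℝ) (ξ : E) :
    truncForm μ M ξ - M ^ 4 * ‖ξ‖ ^ 4 ≤ 1 - cosTransform μ ξ := by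
  have hint := integrable_one_sub_cos_inner (μ := μ) ξ
  have hquad : IntegrableOn (fun u => 1 / 2 * ⟪u, ξ⟫ ^ 2 - M ^ 4 * ‖ξ‖ ^ 4) (closedBall 0 M) μ :=
    ((integrableOn_closedBall_inner_sq M ξ).const_mul _).sub (integrable_const _)
  have hpoint : ∀ u ∈ closedBall (0 : E) M,
      1 / 2 * ⟪u, ξ⟫ ^ 2 - M ^ 4 * ‖ξ‖ ^ 4 ≤ 1 - cos ⟪u, ξ⟫ := fun u hu => by
    have hinner : |⟪u, ξ⟫| ≤ M * ‖ξ‖ := (abs_real_inner_le_norm u ξ).trans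
      (by gcongr; simpa using hu)
    have hpow := pow_le_pow_left₀ (abs_nonneg _) hinner 4
    rw [Even.pow_abs (by decide), mul_pow] at hpow
    linarith [sq_div_two_sub_pow_four_le_one_sub_cos ⟪u, ξ⟫]
  have hconst : ∫ _ in closedBall (0 : E) M, M ^ 4 * ‖ξ‖ ^ 4 ∂μ ≤ M ^ 4 * ‖ξ‖ ^ 4 := by
    rw [setIntegral_const, smul_eq_mul]
    exact mul_le_of_le_one_left (by positivity) measureReal_le_one
  calc truncForm μ M ξ - M ^ 4 * ‖ξ‖ ^ 4
      ≤ ∫ u in closedBall (0 : E) M, (1 / 2 * ⟪u, ξ⟫ ^ 2 - M ^ 4 * ‖ξ‖ ^ 4) ∂μ := by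
        rw [integral_sub ((integrableOn_closedBall_inner_sq M ξ).const_mul _)
          (integrable_const _), integral_const_mul, truncForm]
        linarith
    _ ≤ ∫ u in closedBall (0 : E) M, (1 - cos ⟪u, ξ⟫) ∂μ :=
        setIntegral_mono_on hquad hint.integrableOn measurableSet_closedBall hpoint
    _ ≤ ∫ u, (1 - cos ⟪u, ξ⟫) ∂μ :=
        setIntegral_le_integral hint (ae_of_all _ fun u => sub_nonneg.2 (cos_le_one _))
    _ = 1 - cosTransform μ ξ := (one_sub_cosTransform ξ).symm

lemma one_sub_cosTransform_le_truncForm_add (M : ℝ) (ξ : E) :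
    1 - cosTransform μ ξ ≤ truncForm μ M ξ + 2 * μ.real (closedBall 0 M)ᶜ := by
  have hint := integrable_one_sub_cos_inner (μ := μ) ξ
  rw [one_sub_cosTransform, ← integral_add_compl (measurableSet_closedBall (x := 0) (ε := M)) hint]
  refine add_le_add ?_ ?_
  · rw [truncForm, ← integral_const_mul]
    refine setIntegral_mono hint.integrableOn
      ((integrableOn_closedBall_inner_sq M ξ).const_mul _) fun u => ?_
    linarith [one_sub_sq_div_two_le_cos (x := ⟪u, ξ⟫)]
  · calc ∫ u in (closedBall 0 M)ᶜ, (1 - cos ⟪u, ξ⟫) ∂μ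
        ≤ ∫ _ in (closedBall (0 : E) M)ᶜ, 2 ∂μ :=
          setIntegral_mono hint.integrableOn (integrable_const (2 : ℝ)).integrableOn
            fun u => by linarith [neg_one_le_cos ⟪u, ξ⟫]
      _ = 2 * μ.real (closedBall 0 M)ᶜ := by rw [setIntegral_const, smul_eq_mul, mul_comm]

end TruncatedForm

lemma tendsto_measureReal_compl_closedBall {E : Type*} [SeminormedAddCommGroup E]
    [MeasurableSpace E] [OpensMeasurableSpace E] (μ : Measure E) [IsFiniteMeasure μ] :
    Tendsto (fun M : ℕ => μ.real (closedBall 0 (M : ℝ))ᶜ) atTop (𝓝 0) := by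
  have hInter : ⋂ M : ℕ, (closedBall (0 : E) (M : ℝ))ᶜ = ∅ := by
    rw [← compl_iUnion, iUnion_closedBall_nat, compl_univ]
  have hanti : Antitone fun M : ℕ => (closedBall (0 : E) (M : ℝ))ᶜ := fun a c hac =>
    compl_subset_compl.2 (closedBall_subset_closedBall (by exact_mod_cast hac))
  have htends := tendsto_measure_iInter_atTop (μ := μ)
    (fun M => measurableSet_closedBall.compl.nullMeasurableSet) hanti ⟨0, measure_ne_top _ _⟩
  rw [hInter, measure_empty] at htends
  simpa [Measure.real, Function.comp_def] using
    (ENNReal.tendsto_toReal ENNReal.zero_ne_top).comp htends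

section CharFn

lemma charFn_eq_charFun (Ψ : Measure E3) (ξ : E3) : charFn Ψ ξ = charFun Ψ (-ξ) := by
  simp only [charFn, charFun_apply, inner_neg_right]
  congr! 3
  push_cast
  ring

lemma IsCharFn.norm_le_one {ψ : E3 → ℂ} (h : IsCharFn ψ) (ξ : E3) : ‖ψ ξ‖ ≤ 1 := by
  obtain ⟨Ψ, hΨ, rfl⟩ := h
  exact charFn_eq_charFun Ψ ξ ▸ norm_charFun_le_one _

lemma charFun_conv_map_neg (Ψ : Measure E3) [IsProbabilityMeasure Ψ] (ξ : E3) :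
    charFun (Ψ ∗ Ψ.map fun v => -v) ξ = ((‖charFn Ψ ξ‖ ^ 2 : ℝ) : ℂ) := by
  have hmap : charFun (Ψ.map fun v => -v) ξ = charFun Ψ (-ξ) := by
    simpa using charFun_map_smul (μ := Ψ) (-1) ξ
  have : IsProbabilityMeasure (Ψ.map fun v => -v) :=
    Measure.isProbabilityMeasure_map (by fun_prop)
  rw [charFun_conv, hmap, charFn_eq_charFun, charFun_neg, Complex.mul_conj, RCLike.norm_conj,
    Complex.normSq_eq_norm_sq]

lemma IsCharFn.isCosTransform_norm_sq {ψ : E3 → ℂ} (h : IsCharFn ψ) :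
    IsCosTransform fun ξ => ‖ψ ξ‖ ^ 2 := by
  obtain ⟨Ψ, hΨ, rfl⟩ := h
  have : IsProbabilityMeasure (Ψ.map fun v => -v) :=
    Measure.isProbabilityMeasure_map (by fun_prop)
  refine ⟨Ψ ∗ Ψ.map fun v => -v, inferInstance, funext fun ξ => ?_⟩
  have hint : Integrable (fun u : E3 => Complex.exp (⟪u, ξ⟫ * Complex.I))
      (Ψ ∗ Ψ.map fun v => -v) :=
    .of_bound (C := 1) (by fun_prop) (ae_of_all _ fun u => (Complex.norm_exp_ofReal_mul_I _).le)
  have hre := congrArg Complex.re (charFun_conv_map_neg Ψ ξ)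
  rw [charFun_apply, ← RCLike.re_to_complex, ← integral_re hint] at hre
  simpa only [RCLike.re_to_complex, Complex.exp_ofReal_mul_I_re, Complex.ofReal_re,
    cosTransform] using hre.symm

lemma exists_norm_charFn_sq_lt_one (F : Measure E3) [IsProbabilityMeasure F]
    (hF : ∀ v₀, F {v₀} ≠ 1) : ∃ ξ, ‖charFn F ξ‖ ^ 2 < 1 := by
  by_contra! hge
  have : IsProbabilityMeasure (F.map fun v => -v) :=
    Measure.isProbabilityMeasure_map (by fun_prop)
  have hchar : IsCharFn (charFn F) := ⟨F, inferInstance, rfl⟩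
  have hdirac : F ∗ F.map (fun v => -v) = Measure.dirac 0 := by
    refine Measure.ext_of_charFun (funext fun ξ => ?_)
    have hone : ‖charFn F ξ‖ ^ 2 = 1 :=
      le_antisymm (hchar.isCosTransform_norm_sq.le_one ξ) (hge ξ)
    rw [charFun_conv_map_neg, hone, charFun_dirac]
    simp
  have hzero : ∀ᵐ u ∂(F ∗ F.map fun v => -v), u = 0 := by
    rw [hdirac]
    exact (ae_dirac_iff (measurableSet_singleton 0)).2 rfl
  have hprod : ∀ᵐ p ∂F.prod (F.map fun v => -v), p.1 + p.2 = 0 :=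
    ae_of_ae_map (by fun_prop) hzero
  obtain ⟨v, hv⟩ := (Measure.ae_ae_of_ae_prod hprod).exists
  refine hF v ((prob_compl_eq_zero_iff (measurableSet_singleton v)).1 ?_)
  filter_upwards [ae_of_ae_map (by fun_prop) hv] with w hw
  simpa [sub_eq_zero, eq_comm, ← sub_eq_add_neg] using hw

end CharFn

section SphereGeometry

/-- The cosine of the angle between `ξ` and `σ`, at which the kernel is evaluated; it is `0` at
`ξ = 0`. -/
def cosDev (ξ : E3) (σ : sphere (0 : E3) 1) : ℝ := ⟪ξ, (σ : E3)⟫ / ‖ξ‖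

lemma continuous_cosDev (ξ : E3) : Continuous (cosDev ξ) := by unfold cosDev; fun_prop

lemma continuous_xiPlus (ξ : E3) : Continuous (xiPlus ξ) := by unfold xiPlus; fun_prop

lemma continuous_xiMinus (ξ : E3) : Continuous (xiMinus ξ) := by unfold xiMinus; fun_prop

lemma xiPlus_neg (ξ : E3) (σ : sphere (0 : E3) 1) : xiPlus ξ (-σ) = xiMinus ξ σ := by
  simp [xiPlus, xiMinus, sub_eq_add_neg]

lemma cosDev_neg (ξ : E3) (σ : sphere (0 : E3) 1) : cosDev ξ (-σ) = -cosDev ξ σ := by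
  simp [cosDev, neg_div]

lemma inner_eq_norm_mul_cosDev (ξ : E3) (σ : sphere (0 : E3) 1) :
    ⟪ξ, (σ : E3)⟫ = ‖ξ‖ * cosDev ξ σ := by
  rcases eq_or_ne ξ 0 with rfl | hξ
  · simp
  · rw [cosDev, mul_div_cancel₀ _ (norm_ne_zero_iff.2 hξ)]

lemma norm_xiPlus_sq (ξ : E3) (σ : sphere (0 : E3) 1) :
    ‖xiPlus ξ σ‖ ^ 2 = ‖ξ‖ ^ 2 * ((1 + cosDev ξ σ) / 2) := by
  rw [xiPlus, norm_add_sq_real, real_inner_smul_left, real_inner_smul_right,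
    inner_eq_norm_mul_cosDev, norm_smul, norm_smul, norm_eq_of_mem_sphere σ]
  simp only [norm_div, norm_one, RCLike.norm_ofNat, norm_norm]
  ring

lemma norm_xiMinus_sq (ξ : E3) (σ : sphere (0 : E3) 1) :
    ‖xiMinus ξ σ‖ ^ 2 = ‖ξ‖ ^ 2 * ((1 - cosDev ξ σ) / 2) := by
  rw [← xiPlus_neg, norm_xiPlus_sq, cosDev_neg, sub_eq_add_neg]

lemma abs_cosDev_le_one (ξ : E3) (σ : sphere (0 : E3) 1) : |cosDev ξ σ| ≤ 1 := by
  rw [cosDev, abs_div, abs_norm]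
  refine div_le_one_of_le₀ ?_ (norm_nonneg _)
  simpa using abs_real_inner_le_norm ξ (σ : E3)

lemma cosDev_sq_le_one (ξ : E3) (σ : sphere (0 : E3) 1) : cosDev ξ σ ^ 2 ≤ 1 :=
  (sq_le_one_iff_abs_le_one _).2 (abs_cosDev_le_one ξ σ)

lemma norm_xiPlus_le (ξ : E3) (σ : sphere (0 : E3) 1) : ‖xiPlus ξ σ‖ ≤ ‖ξ‖ := by
  have := le_of_abs_le (abs_cosDev_le_one ξ σ)
  refine le_of_sq_le_sq ?_ (norm_nonneg ξ)
  rw [norm_xiPlus_sq]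
  exact mul_le_of_le_one_right (sq_nonneg _) (by linarith)

lemma norm_xiMinus_le (ξ : E3) (σ : sphere (0 : E3) 1) : ‖xiMinus ξ σ‖ ≤ ‖ξ‖ :=
  xiPlus_neg ξ σ ▸ norm_xiPlus_le ξ (-σ)

instance : IsFiniteMeasure sphμ := by unfold sphμ; infer_instance

instance : Measure.IsOpenPosMeasure sphμ := by unfold sphμ; infer_instance

/-- The action of a linear isometry on the unit sphere. -/
def rotateSphere (R : E3 ≃ₗᵢ[ℝ] E3) (σ : sphere (0 : E3) 1) : sphere (0 : E3) 1 :=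
  ⟨R σ, by simp⟩

lemma continuous_rotateSphere (R : E3 ≃ₗᵢ[ℝ] E3) : Continuous (rotateSphere R) :=
  Continuous.subtype_mk (by fun_prop) _

lemma cosDev_rotateSphere (R : E3 ≃ₗᵢ[ℝ] E3) (ξ : E3) (σ : sphere (0 : E3) 1) :
    cosDev (R ξ) (rotateSphere R σ) = cosDev ξ σ := by
  simp [cosDev, rotateSphere]

lemma cosDev_smul {a : ℝ} (ha : 0 < a) (ξ : E3) (σ : sphere (0 : E3) 1) :
    cosDev (a • ξ) σ = cosDev ξ σ := by
  rw [cosDev, real_inner_smul_left, norm_smul, norm_of_nonneg ha.le,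
    mul_div_mul_left _ _ ha.ne', cosDev]

open scoped Pointwise in
lemma smul_image_preimage_rotateSphere (R : E3 ≃ₗᵢ[ℝ] E3) (S : Set (sphere (0 : E3) 1)) :
    Ioo (0 : ℝ) 1 • ((↑) '' (rotateSphere R ⁻¹' S) : Set E3)
      = R ⁻¹' (Ioo (0 : ℝ) 1 • ((↑) '' S : Set E3)) := by
  ext x
  simp only [Set.mem_smul, mem_preimage, mem_image]
  constructor
  · rintro ⟨r, hr, _, ⟨σ, hσ, rfl⟩, rfl⟩
    exact ⟨r, hr, _, ⟨_, hσ, rfl⟩, by simp [rotateSphere]⟩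
  · rintro ⟨r, hr, _, ⟨σ, hσ, rfl⟩, hx⟩
    have hinv : rotateSphere R (rotateSphere R.symm σ) = σ := by ext1; simp [rotateSphere]
    exact ⟨r, hr, R.symm σ, ⟨rotateSphere R.symm σ, by rwa [hinv], rfl⟩,
      R.injective (by simp [← hx])⟩

lemma measurePreserving_rotateSphere (R : E3 ≃ₗᵢ[ℝ] E3) :
    MeasurePreserving (rotateSphere R) sphμ sphμ := by
  have hmeas := (continuous_rotateSphere R).measurable
  refine ⟨hmeas, ?_⟩
  ext S hS
  rw [Measure.map_apply hmeas hS, sphμ, Measure.toSphere_apply' _ hS,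
    Measure.toSphere_apply' _ (hmeas hS), smul_image_preimage_rotateSphere]
  exact congrArg _ (R.measurePreserving.measure_preimage_equiv (f := R.toMeasurableEquiv) _)

lemma exists_cosDev_rotateSphere_eq {ξ η : E3} (hξ : ξ ≠ 0) (hη : η ≠ 0) :
    ∃ R : E3 ≃ₗᵢ[ℝ] E3, ∀ σ, cosDev η (rotateSphere R σ) = cosDev ξ σ := by
  have hnorm : ‖(‖η‖ / ‖ξ‖) • ξ‖ = ‖η‖ := by
    rw [norm_smul, norm_of_nonneg (by positivity), div_mul_cancel₀ _ (norm_ne_zero_iff.2 hξ)]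
  have hpos : 0 < ‖η‖ / ‖ξ‖ := div_pos (norm_pos_iff.2 hη) (norm_pos_iff.2 hξ)
  refine ⟨(ℝ ∙ ((‖η‖ / ‖ξ‖) • ξ - η))ᗮ.reflection, fun σ => ?_⟩
  rw [← cosDev_smul hpos ξ σ, ← cosDev_rotateSphere _ ((‖η‖ / ‖ξ‖) • ξ) σ,
    Submodule.reflection_sub hnorm]

lemma integrable_zonal {g : ℝ → ℝ} {ξ η : E3} (hξ : ξ ≠ 0) (hη : η ≠ 0)
    (h : Integrable (fun σ => g (cosDev η σ)) sphμ) :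
    Integrable (fun σ => g (cosDev ξ σ)) sphμ := by
  obtain ⟨R, hR⟩ := exists_cosDev_rotateSphere_eq hξ hη
  refine ((measurePreserving_rotateSphere R).integrable_comp_of_integrable h).congr
    (ae_of_all _ fun σ => ?_)
  simp only [Function.comp, hR]

lemma integral_zonal_eq {g : ℝ → ℝ} (hg : Measurable g) {ξ η : E3} (hξ : ξ ≠ 0) (hη : η ≠ 0) :
    ∫ σ, g (cosDev ξ σ) ∂sphμ = ∫ σ, g (cosDev η σ) ∂sphμ := by
  obtain ⟨R, hR⟩ := exists_cosDev_rotateSphere_eq hξ hη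
  conv_rhs => rw [← (measurePreserving_rotateSphere R).map_eq]
  have hgη : Measurable fun σ => g (cosDev η σ) := hg.comp (continuous_cosDev η).measurable
  rw [integral_map (continuous_rotateSphere R).measurable.aemeasurable hgη.aestronglyMeasurable]
  simp only [hR]

/-- The band of directions `σ` around `ξ` whose deviation `1 - cosDev ξ σ` is comparable to `a`. -/
def deviationBand (ξ : E3) (a : ℝ) : Set (sphere (0 : E3) 1) :=
  {σ | a / 64 ≤ 1 - cosDev ξ σ ∧ 1 - cosDev ξ σ ≤ a}

lemma measurableSet_deviationBand (ξ : E3) (a : ℝ) : MeasurableSet (deviationBand ξ a) := by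
  have hcont : Continuous fun σ => 1 - cosDev ξ σ := continuous_const.sub (continuous_cosDev ξ)
  exact ((isClosed_le continuous_const hcont).inter
    (isClosed_le hcont continuous_const)).measurableSet

lemma cosDev_single_zero (σ : sphere (0 : E3) 1) :
    cosDev (EuclideanSpace.single 0 1) σ = (σ : E3) 0 := by
  simp [cosDev, EuclideanSpace.inner_single_left]

/-- A box inside the cone over `deviationBand (single 0 1) a`, used to bound the measure of the
band from below. -/
def bandBox (a : ℝ) : Set E3 :=
  (WithLp.ofLp : E3 → Fin 3 → ℝ) ⁻¹'
    pi univ fun i => Ioo (![1 / 4, √a / 8, √a / 8] i) (![1 / 2, √a / 4, √a / 4] i)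

lemma volume_bandBox {a : ℝ} (ha : 0 ≤ a) : volume (bandBox a) = ENNReal.ofReal (a / 256) := by
  rw [bandBox, (PiLp.volume_preserving_ofLp (Fin 3)).measure_preimage
    (MeasurableSet.univ_pi fun i => measurableSet_Ioo).nullMeasurableSet, volume_pi_Ioo,
    Fin.prod_univ_three, ← ENNReal.ofReal_mul (by simp; norm_num),
    ← ENNReal.ofReal_mul (by simp; linarith [sqrt_nonneg a])]
  congr 1
  simp
  nlinarith [sq_sqrt ha]

open scoped Pointwise in
lemma bandBox_subset {a : ℝ} (ha : 0 < a) (ha1 : a ≤ 1) :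
    bandBox a ⊆ Ioo (0 : ℝ) 1 • ((↑) '' deviationBand (EuclideanSpace.single 0 1) a : Set E3) := by
  intro v hv
  simp only [bandBox, mem_preimage, Set.mem_pi, mem_univ, forall_true_left] at hv
  obtain ⟨h0, h0'⟩ : 1 / 4 < v 0 ∧ v 0 < 1 / 2 := by simpa using hv 0
  obtain ⟨h1, h1'⟩ : √a / 8 < v 1 ∧ v 1 < √a / 4 := by simpa using hv 1
  obtain ⟨h2, h2'⟩ : √a / 8 < v 2 ∧ v 2 < √a / 4 := by simpa using hv 2
  have hsq : √a ^ 2 = a := sq_sqrt ha.le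
  have hsa : 0 < √a := sqrt_pos.2 ha
  have hnorm : ‖v‖ ^ 2 = v 0 ^ 2 + v 1 ^ 2 + v 2 ^ 2 := by
    simp [EuclideanSpace.norm_sq_eq, Fin.sum_univ_three]
  have htrans_le : v 1 ^ 2 + v 2 ^ 2 ≤ a / 8 := by nlinarith [hsa]
  have hle_trans : a / 32 ≤ v 1 ^ 2 + v 2 ^ 2 := by nlinarith [hsa]
  have hnorm_le : ‖v‖ ≤ 3 / 4 := le_of_sq_le_sq (by nlinarith) (by norm_num)
  have hle_norm : v 0 ≤ ‖v‖ := le_of_sq_le_sq (by nlinarith) (norm_nonneg _)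
  have hpos : 0 < ‖v‖ := by linarith
  have hfactor : (‖v‖ - v 0) * (‖v‖ + v 0) = v 1 ^ 2 + v 2 ^ 2 := by linarith
  have hmem : ‖v‖⁻¹ • v ∈ sphere (0 : E3) 1 := by simp [norm_smul, hpos.ne']
  have hdev : 1 - cosDev (EuclideanSpace.single 0 1) ⟨_, hmem⟩ = (‖v‖ - v 0) / ‖v‖ := by
    rw [cosDev_single_zero]
    simp
    field_simp
  refine Set.mem_smul.2 ⟨‖v‖, ⟨hpos, by linarith⟩, ‖v‖⁻¹ • v, ⟨⟨_, hmem⟩, ⟨?_, ?_⟩, rfl⟩,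
    smul_inv_smul₀ hpos.ne' v⟩
  · rw [hdev, le_div_iff₀ hpos]
    nlinarith [hfactor]
  · rw [hdev, div_le_iff₀ hpos]
    nlinarith [hfactor]

lemma le_measureReal_deviationBand {a : ℝ} (ha : 0 < a) (ha1 : a ≤ 1) {ξ : E3} (hξ : ξ ≠ 0) :
    3 * a / 256 ≤ sphμ.real (deviationBand ξ a) := by
  have hpole : ENNReal.ofReal (3 * a / 256)
      ≤ sphμ (deviationBand (EuclideanSpace.single 0 1) a) := by
    rw [sphμ, Measure.toSphere_apply' _ (measurableSet_deviationBand _ _), mul_div_assoc,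
      ENNReal.ofReal_mul (by norm_num), ← volume_bandBox ha.le, finrank_euclideanSpace_fin]
    exact mul_le_mul' (by simp) (measure_mono (bandBox_subset ha ha1))
  obtain ⟨R, hR⟩ := exists_cosDev_rotateSphere_eq hξ
    (by simp : (EuclideanSpace.single 0 1 : E3) ≠ 0)
  have hpre : rotateSphere R ⁻¹' deviationBand (EuclideanSpace.single 0 1) a
      = deviationBand ξ a := by
    ext σ
    simp only [deviationBand, mem_preimage, Set.mem_ofPred_eq, hR]
  rw [← (measurePreserving_rotateSphere R).measure_preimage
    (measurableSet_deviationBand _ _).nullMeasurableSet, hpre] at hpole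
  exact (ENNReal.ofReal_le_iff_le_toReal (measure_ne_top _ _)).1 hpole

end SphereGeometry

lemma integral_le_neg_mul_of_le_on {α : Type*} [MeasurableSpace α] {μ : Measure α}
    [IsFiniteMeasure μ] {f : α → ℝ} (hf : Integrable f μ) {A : Set α} (hA : MeasurableSet A)
    {v m : ℝ} (hv : 0 ≤ v) (hm : m ≤ μ.real A) (hnonpos : ∀ x, f x ≤ 0)
    (hfA : ∀ x ∈ A, f x ≤ -v) : ∫ x, f x ∂μ ≤ -(v * m) :=
  calc ∫ x, f x ∂μ ≤ ∫ x in A, f x ∂μ := by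
        rw [← integral_add_compl hA hf]
        linarith [setIntegral_nonpos (μ := μ) hA.compl fun x _ => hnonpos x]
    _ ≤ ∫ _ in A, -v ∂μ :=
        setIntegral_mono_on hf.integrableOn (integrable_const _).integrableOn hA hfA
    _ = -(v * μ.real A) := by
        rw [setIntegral_const, smul_eq_mul]
        ring
    _ ≤ -(v * m) := neg_le_neg (mul_le_mul_of_nonneg_left hm hv)

section Kernel

/-- The quantitative content of an angular singularity of order `1 + s` in `1 - cos θ`. -/
structure KernelLowerBound (b : ℝ → ℝ) (s k c₀ : ℝ) : Prop where
  k_pos : 0 < k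
  c₀_pos : 0 < c₀
  c₀_lt_one : c₀ < 1
  le : ∀ c, c₀ < c → c < 1 → k * (1 - c) ^ (-(1 + s)) ≤ b c

lemma KernelLowerBound.pos {b : ℝ → ℝ} {s k c₀ c : ℝ} (h : KernelLowerBound b s k c₀)
    (hc₀ : c₀ < c) (hc1 : c < 1) : 0 < b c :=
  (mul_pos h.k_pos (rpow_pos_of_pos (sub_pos.2 hc1) _)).trans_le (h.le c hc₀ hc1)

lemma KernelLowerBound.of_exponent_le {b : ℝ → ℝ} {s s' k c₀ : ℝ}
    (h : KernelLowerBound b s k c₀) (hs : s' ≤ s) : KernelLowerBound b s' k c₀ where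
  k_pos := h.k_pos
  c₀_pos := h.c₀_pos
  c₀_lt_one := h.c₀_lt_one
  le c hc hc1 := (mul_le_mul_of_nonneg_left (rpow_le_rpow_of_exponent_ge (by linarith)
    (by linarith [h.c₀_pos]) (by linarith)) h.k_pos.le).trans (h.le c hc hc1)

lemma sq_le_five_mul_one_sub_cos {θ : ℝ} (hθ : |θ| ≤ π) : θ ^ 2 ≤ 5 * (1 - cos θ) := by
  have hpi : π ^ 2 < 10 := by nlinarith [pi_lt_d2, pi_pos]
  have hfrac : 1 / 5 ≤ 2 / π ^ 2 := by
    rw [div_le_div_iff₀ (by norm_num) (by positivity)]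
    linarith
  linarith [cos_le_one_sub_mul_cos_sq hθ, mul_le_mul_of_nonneg_right hfrac (sq_nonneg θ)]

lemma KernelSingular.exists_kernelLowerBound {b : ℝ → ℝ} {s K : ℝ} (hs : 0 < s) (hK : 0 < K)
    (h : KernelSingular b s K) : ∃ k c₀, KernelLowerBound b s k c₀ := by
  obtain ⟨θ₁, hθ₁, hsub⟩ := mem_nhdsGT_iff_exists_Ioo_subset.1
    (h.eventually (lt_mem_nhds (half_lt_self hK)))
  set θ₀ := min θ₁ 1
  have hθ₀ : 0 < θ₀ := lt_min hθ₁ one_pos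
  have hθ₀_le : θ₀ ≤ 1 := min_le_right _ _
  have hpi := pi_gt_three
  refine ⟨K / 2 * 5 ^ (-(1 + s)), cos θ₀, by positivity,
    cos_pos_of_mem_Ioo ⟨by linarith, by linarith⟩,
    by simpa using cos_lt_cos_of_nonneg_of_le_pi_div_two le_rfl (by linarith) hθ₀,
    fun c hc hc1 => ?_⟩
  have hcos : cos (arccos c) = c := cos_arccos (by linarith [neg_one_le_cos θ₀]) hc1.le
  have hpos : 0 < arccos c := arccos_pos.2 hc1
  have hlt : arccos c < θ₀ := by
    simpa [arccos_cos hθ₀.le (by linarith : θ₀ ≤ π)] using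
      arccos_lt_arccos (by linarith [neg_one_le_cos θ₀]) hc hc1.le
  have hb : K / 2 < b c * arccos c ^ (2 + 2 * s) := by
    simpa [hcos] using hsub ⟨hpos, hlt.trans_le (min_le_left _ _)⟩
  have hpow : arccos c ^ (2 + 2 * s) ≤ (5 * (1 - c)) ^ (1 + s) := by
    have hsq : arccos c ^ 2 ≤ 5 * (1 - c) := by
      simpa [hcos] using sq_le_five_mul_one_sub_cos (θ := arccos c)
        (by rw [abs_of_pos hpos]; exact arccos_le_pi c)
    rw [show 2 + 2 * s = (2 : ℕ) * (1 + s) by push_cast; ring, rpow_natCast_mul hpos.le]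
    gcongr
  have hbc : 0 < b c := pos_of_mul_pos_left ((half_pos hK).trans hb) (rpow_nonneg hpos.le _)
  rw [mul_assoc, ← mul_rpow (by norm_num) (by linarith), rpow_neg (by linarith),
    ← div_eq_mul_inv, div_le_iff₀ (rpow_pos_of_pos (by linarith) _)]
  exact hb.le.trans (mul_le_mul_of_nonneg_left hpow hbc.le)

end Kernel

section MaximumPrinciple

variable {X : Type*} [TopologicalSpace X] {C : Set X} {t₀ T : ℝ} {u : ℝ → X → ℝ}

lemma exists_first_nonneg [T2Space X] (hC : IsCompact C)
    (hu : ContinuousOn (fun p : ℝ × X => u p.1 p.2) (Icc t₀ T ×ˢ C))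
    (h : ∃ t ∈ Icc t₀ T, ∃ x ∈ C, 0 ≤ u t x) :
    ∃ t ∈ Icc t₀ T, (∃ x ∈ C, 0 ≤ u t x) ∧ ∀ τ ∈ Ico t₀ t, ∀ y ∈ C, u τ y < 0 := by
  have hcomp : IsCompact (Icc t₀ T ×ˢ C) := isCompact_Icc.prod hC
  obtain ⟨t', ht', x', hx', hpos'⟩ := h
  obtain ⟨⟨t, x⟩, ⟨⟨ht, hx⟩, hpos⟩, hmin⟩ :=
    (hcomp.of_isClosed_subset (hu.preimage_isClosed_of_isClosed hcomp.isClosed isClosed_Ici)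
      inter_subset_left).exists_isMinOn ⟨(t', x'), ⟨ht', hx'⟩, hpos'⟩ continuous_fst.continuousOn
  refine ⟨t, ht, ⟨x, hx, hpos⟩, fun τ hτ y hy => ?_⟩
  by_contra! hτy
  have hmem : (τ, y) ∈ Icc t₀ T ×ˢ C ∩ (fun p : ℝ × X => u p.1 p.2) ⁻¹' Ici 0 :=
    ⟨⟨⟨hτ.1, hτ.2.le.trans ht.2⟩, hy⟩, hτy⟩
  exact hτ.2.not_ge (hmin hmem)

lemma nonneg_of_hasDerivAt_of_neg_left {f : ℝ → ℝ} {d t : ℝ} (hf : HasDerivAt f d t)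
    (ht : f t = 0) (hlt : t₀ < t) (hneg : ∀ τ ∈ Ioo t₀ t, f τ < 0) : 0 ≤ d := by
  refine ge_of_tendsto ((hasDerivWithinAt_iff_tendsto_slope' (s := Iio t) (by simp)).1
    hf.hasDerivWithinAt) ?_
  filter_upwards [Ioo_mem_nhdsLT hlt] with τ hτ
  rw [slope_def_field, ht, sub_zero]
  exact div_nonneg_of_nonpos (hneg τ hτ).le (sub_nonpos.2 hτ.2.le)

lemma neg_of_forall_touch [T2Space X] (hC : IsCompact C)
    (hu : ContinuousOn (fun p : ℝ × X => u p.1 p.2) (Icc t₀ T ×ˢ C))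
    (hinit : ∀ x ∈ C, u t₀ x < 0)
    (htouch : ∀ t ∈ Ioc t₀ T, ∀ x ∈ C, (∀ y ∈ C, u t y ≤ 0) → u t x = 0 →
      ∃ d < 0, HasDerivAt (fun τ => u τ x) d t) :
    ∀ t ∈ Icc t₀ T, ∀ x ∈ C, u t x < 0 := by
  by_contra! hcon
  obtain ⟨t, ht, ⟨x, hx, hpos⟩, hneg⟩ := exists_first_nonneg hC hu hcon
  have hlt : t₀ < t := ht.1.lt_of_ne fun h => (hinit x hx).not_ge (h ▸ hpos)
  have hle : ∀ y ∈ C, u t y ≤ 0 := by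
    intro y hy
    have hcl : closure (Ico t₀ t) = Icc t₀ t := closure_Ico hlt.ne
    have hcont : ContinuousOn (fun τ => u τ y) (closure (Ico t₀ t)) :=
      hu.comp (f := fun τ : ℝ => (τ, y)) (by fun_prop) fun τ hτ =>
        ⟨Icc_subset_Icc_right ht.2 (hcl ▸ hτ), hy⟩
    exact le_on_closure (f := fun τ => u τ y) (fun τ hτ => (hneg τ hτ y hy).le) hcont
      continuousOn_const (hcl ▸ right_mem_Icc.2 hlt.le)
  have hzero : u t x = 0 := le_antisymm (hle x hx) hpos
  obtain ⟨d, hd, hderiv⟩ := htouch t ⟨hlt, ht.2⟩ x hx hle hzero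
  exact hd.not_ge (nonneg_of_hasDerivAt_of_neg_left hderiv hzero hlt fun τ hτ =>
    hneg τ ⟨hτ.1.le, hτ.2⟩ x hx)

end MaximumPrinciple

section Subsolution

/-- The collision integrand for a real-valued function `φ`. -/
def realCollisionIntegrand (b : ℝ → ℝ) (φ : E3 → ℝ) (ξ : E3) (σ : sphere (0 : E3) 1) : ℝ :=
  b (cosDev ξ σ) * (φ (xiPlus ξ σ) * φ (xiMinus ξ σ) - φ ξ)

/-- A real-valued subsolution of the Bobylev equation consisting of nonnegative characteristic
functions; the squared modulus `‖ψ‖ ^ 2` of a complex solution `ψ` is one. -/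
structure IsSubsolution (b : ℝ → ℝ) (φ : ℝ → E3 → ℝ) : Prop where
  cont : ContinuousOn (fun p : ℝ × E3 => φ p.1 p.2) (Ici 0 ×ˢ univ)
  nonneg : ∀ t ≥ 0, ∀ ξ, 0 ≤ φ t ξ
  isCosTransform : ∀ t ≥ 0, IsCosTransform (φ t)
  integrable : ∀ t ≥ 0, ∀ ξ, Integrable (realCollisionIntegrand b (φ t) ξ) sphμ
  deriv_le : ∀ t > 0, ∀ ξ, ∃ d ≤ ∫ σ, realCollisionIntegrand b (φ t) ξ σ ∂sphμ,
    HasDerivAt (fun τ => φ τ ξ) d t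

variable {b : ℝ → ℝ}

lemma integrable_realCollisionIntegrand_norm_sq (hbm : Measurable b) {ψ : ℝ → E3 → ℂ}
    {ψ₀ : E3 → ℂ} (h : IsBobylevSolution b ψ ψ₀) {t : ℝ} (ht : 0 ≤ t) (ξ : E3) :
    Integrable (realCollisionIntegrand b (fun ξ => ‖ψ t ξ‖ ^ 2) ξ) sphμ := by
  have hcont : Continuous fun ξ => ‖ψ t ξ‖ ^ 2 :=
    (h.isCharFn t ht).isCosTransform_norm_sq.continuous
  have hmeas : Measurable (realCollisionIntegrand b (fun ξ => ‖ψ t ξ‖ ^ 2) ξ) :=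
    (hbm.comp (continuous_cosDev ξ).measurable).mul
      (((hcont.comp (continuous_xiPlus ξ)).mul
        (hcont.comp (continuous_xiMinus ξ))).sub continuous_const).measurable
  refine ((h.integrable t ht ξ).norm.const_mul 2).mono' hmeas.aestronglyMeasurable
    (ae_of_all _ fun σ => ?_)
  have hle := (h.isCharFn t ht).norm_le_one
  rw [realCollisionIntegrand, norm_mul, bobylevIntegrand, norm_mul, Complex.norm_real,
    mul_left_comm]
  refine mul_le_mul_of_nonneg_left ?_ (norm_nonneg (b _))
  rw [← mul_pow, ← norm_mul]
  generalize hA : ψ t (xiPlus ξ σ) * ψ t (xiMinus ξ σ) = A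
  have hA1 : ‖A‖ ≤ 1 := by
    rw [← hA, norm_mul]
    exact mul_le_one₀ (hle _) (norm_nonneg _) (hle _)
  rw [sq_sub_sq, norm_mul, norm_of_nonneg (by positivity)]
  exact mul_le_mul (by linarith [hle ξ]) (abs_norm_sub_norm_le _ _) (norm_nonneg _) two_pos.le

lemma two_mul_re_inner_le (z w : ℂ) : 2 * ⟪z, (w - z : ℂ)⟫ ≤ ‖w‖ ^ 2 - ‖z‖ ^ 2 := by
  have hexp : ‖w - z‖ ^ 2 = ‖w‖ ^ 2 - 2 * ⟪w, z⟫ + ‖z‖ ^ 2 := norm_sub_sq_real w z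
  rw [real_inner_comm] at hexp
  rw [inner_sub_right, real_inner_self_eq_norm_sq]
  linarith [sq_nonneg ‖w - z‖]

lemma IsBobylevSolution.isSubsolution_norm_sq (hbm : Measurable b) (hb : ∀ x, 0 ≤ b x)
    {ψ : ℝ → E3 → ℂ} {ψ₀ : E3 → ℂ} (h : IsBobylevSolution b ψ ψ₀) :
    IsSubsolution b (fun t ξ => ‖ψ t ξ‖ ^ 2) where
  cont := h.cont.norm.pow 2
  nonneg _ _ _ := sq_nonneg _
  isCosTransform t ht := (h.isCharFn t ht).isCosTransform_norm_sq
  integrable t ht ξ := integrable_realCollisionIntegrand_norm_sq hbm h ht ξ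
  deriv_le t ht ξ := by
    have hint := h.integrable t ht.le ξ
    refine ⟨_, ?_, (h.eq t ht.le ξ).norm_sq.hasDerivAt (Ici_mem_nhds ht)⟩
    rw [← integral_inner hint, ← integral_const_mul]
    refine integral_mono ((hint.const_inner _).const_mul 2)
      (integrable_realCollisionIntegrand_norm_sq hbm h ht.le ξ) fun σ => ?_
    rw [bobylevIntegrand, realCollisionIntegrand, ← Complex.real_smul, inner_smul_right,
      mul_left_comm, ← mul_pow, ← norm_mul]
    exact mul_le_mul_of_nonneg_left (two_mul_re_inner_le _ _) (hb _)

variable {φ : ℝ → E3 → ℝ}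

lemma IsSubsolution.le_one (h : IsSubsolution b φ) {t : ℝ} (ht : 0 ≤ t) (ξ : E3) : φ t ξ ≤ 1 :=
  (h.isCosTransform t ht).le_one ξ

end Subsolution

section UnitLevelSet

variable {b : ℝ → ℝ} {s k c₀ : ℝ} {φ : ℝ → E3 → ℝ}

lemma exists_norm_eq_one_inner_eq_zero (ξ : E3) : ∃ η : E3, ‖η‖ = 1 ∧ ⟪ξ, η⟫ = 0 := by
  have hfin : 0 < Module.finrank ℝ (ℝ ∙ ξ)ᗮ := by
    have hsum := (ℝ ∙ ξ).finrank_add_finrank_orthogonal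
    have hle := finrank_span_le_card (R := ℝ) ({ξ} : Set E3)
    simp only [finrank_euclideanSpace_fin, toFinset_singleton, Finset.card_singleton] at hsum hle
    omega
  have := Module.nontrivial_of_finrank_pos hfin
  obtain ⟨η, hη⟩ := exists_norm_eq (ℝ ∙ ξ)ᗮ zero_le_one
  exact ⟨η, hη, Submodule.mem_orthogonal_singleton_iff_inner_right.1 η.2⟩

lemma exists_xiMinus_eq {ξ ω : E3} (hξ : ξ ≠ 0) (hperp : ⟪ξ, ω⟫ = 0) {c : ℝ}
    (hnorm : ‖ω‖ ^ 2 = (1 - c ^ 2) * ‖ξ‖ ^ 2) :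
    ∃ σ, cosDev ξ σ = c ∧ xiMinus ξ σ = ((1 - c) / 2) • ξ - (1 / 2 : ℝ) • ω := by
  have hpos : 0 < ‖ξ‖ := norm_pos_iff.2 hξ
  have hunit : ‖c • ξ + ω‖ = ‖ξ‖ := by
    rw [← sq_eq_sq₀ (norm_nonneg _) (norm_nonneg _), norm_add_sq_real, real_inner_smul_left, hperp,
      norm_smul, mul_pow, norm_eq_abs, sq_abs, hnorm]
    ring
  refine ⟨⟨‖ξ‖⁻¹ • (c • ξ + ω), by simp [-smul_add, norm_smul, hunit, hpos.ne']⟩, ?_, ?_⟩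
  · rw [cosDev, real_inner_smul_right, inner_add_right, real_inner_smul_right, hperp,
      real_inner_self_eq_norm_sq]
    field_simp
    ring
  · rw [xiMinus, smul_smul, div_mul_eq_mul_div, mul_inv_cancel₀ hpos.ne']
    module

lemma IsSubsolution.integral_nonneg_of_eq_one (h : IsSubsolution b φ) {t : ℝ} (ht : 0 < t)
    {ξ : E3} (hξ : φ t ξ = 1) : 0 ≤ ∫ σ, realCollisionIntegrand b (φ t) ξ σ ∂sphμ := by
  obtain ⟨d, hd, hderiv⟩ := h.deriv_le t ht ξ
  have hmax : IsLocalMax (fun τ => φ τ ξ) t := by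
    filter_upwards [lt_mem_nhds ht] with τ hτ
    exact hξ ▸ h.le_one hτ.le ξ
  rwa [hmax.hasDerivAt_eq_zero hderiv] at hd

lemma IsSubsolution.mul_le_one (h : IsSubsolution b φ) {t : ℝ} (ht : 0 ≤ t) (ξ η : E3) :
    φ t ξ * φ t η ≤ 1 :=
  mul_le_one₀ (h.le_one ht _) (h.nonneg t ht _) (h.le_one ht _)

lemma IsSubsolution.xiMinus_eq_one (h : IsSubsolution b φ) (hb : ∀ x, 0 ≤ b x)
    (hk : KernelLowerBound b s k c₀) {t : ℝ} (ht : 0 < t) {ξ : E3} (hξ : φ t ξ = 1)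
    {σ : sphere (0 : E3) 1} (hσ : cosDev ξ σ ∈ Ioo c₀ 1) : φ t (xiMinus ξ σ) = 1 := by
  have hnonpos (σ) : realCollisionIntegrand b (φ t) ξ σ ≤ 0 :=
    mul_nonpos_of_nonneg_of_nonpos (hb _) (hξ ▸ sub_nonpos.2 (h.mul_le_one ht.le _ _))
  have hae : realCollisionIntegrand b (φ t) ξ =ᵐ[sphμ] 0 := by
    refine (integral_eq_zero_iff_of_nonneg (fun σ => neg_nonneg.2 (hnonpos σ))
      (h.integrable t ht.le ξ).neg).1 ?_ |>.mono fun σ hσ => neg_eq_zero.1 hσ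
    exact le_antisymm (by simpa [integral_neg] using h.integral_nonneg_of_eq_one ht hξ)
      (integral_nonneg fun σ => neg_nonneg.2 (hnonpos σ))
  set U : Set (sphere (0 : E3) 1) := cosDev ξ ⁻¹' Ioo c₀ 1
  have hU : IsOpen U := isOpen_Ioo.preimage (continuous_cosDev ξ)
  have hprod_ae : (fun σ => φ t (xiPlus ξ σ) * φ t (xiMinus ξ σ)) =ᵐ[sphμ.restrict U] 1 := by
    filter_upwards [ae_restrict_of_ae hae, ae_restrict_mem hU.measurableSet] with σ h0 hσ
    have hzero := (mul_eq_zero.1 h0).resolve_left (hk.pos hσ.1 hσ.2).ne'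
    rwa [hξ, sub_eq_zero] at hzero
  have hφ := (h.isCosTransform t ht.le).continuous
  have hprod : φ t (xiPlus ξ σ) * φ t (xiMinus ξ σ) = 1 :=
    Measure.eqOn_open_of_ae_eq hprod_ae hU ((hφ.comp (continuous_xiPlus ξ)).mul
      (hφ.comp (continuous_xiMinus ξ))).continuousOn continuousOn_const hσ
  refine le_antisymm (h.le_one ht.le _) (hprod ▸ ?_)
  exact mul_le_of_le_one_left (h.nonneg t ht.le _) (h.le_one ht.le _)

lemma IsSubsolution.eq_one_of_inner_eq_zero (h : IsSubsolution b φ) (hb : ∀ x, 0 ≤ b x)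
    (hk : KernelLowerBound b s k c₀) {t : ℝ} (ht : 0 < t) {ξ ω : E3} (hξ0 : ξ ≠ 0)
    (hξ : φ t ξ = 1) (hperp : ⟪ξ, ω⟫ = 0) (hsmall : ‖ω‖ ^ 2 < (1 - c₀ ^ 2) * ‖ξ‖ ^ 2) :
    φ t ω = 1 := by
  have hφ := h.isCosTransform t ht.le
  rcases eq_or_ne ω 0 with rfl | hω0
  · exact hφ.map_zero
  have hξpos : 0 < ‖ξ‖ ^ 2 := pow_pos (norm_pos_iff.2 hξ0) 2
  set q := ‖ω‖ ^ 2 / ‖ξ‖ ^ 2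
  have hq0 : 0 < q := div_pos (pow_pos (norm_pos_iff.2 hω0) 2) hξpos
  have hq1 : q < 1 - c₀ ^ 2 := (div_lt_iff₀ hξpos).2 hsmall
  have hsq : √(1 - q) ^ 2 = 1 - q := sq_sqrt (by linarith [sq_nonneg c₀])
  have hmem : √(1 - q) ∈ Ioo c₀ 1 :=
    ⟨lt_sqrt_of_sq_lt (by linarith), (sqrt_lt' one_pos).2 (by linarith)⟩
  have hnorm : ‖ω‖ ^ 2 = (1 - √(1 - q) ^ 2) * ‖ξ‖ ^ 2 := by
    rw [hsq, sub_sub_cancel, div_mul_cancel₀ _ hξpos.ne']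
  obtain ⟨σ, hσ, hσω⟩ := exists_xiMinus_eq hξ0 hperp hnorm
  obtain ⟨σ', hσ', hσω'⟩ := exists_xiMinus_eq (ω := -ω) hξ0 (by simpa using hperp)
    (by simpa using hnorm)
  have hdiff : xiMinus ξ σ' - xiMinus ξ σ = ω := by
    rw [hσω, hσω']
    module
  rw [← hdiff]
  exact hφ.sub_eq_one (h.xiMinus_eq_one hb hk ht hξ (hσ' ▸ hmem))
    (h.xiMinus_eq_one hb hk ht hξ (hσ ▸ hmem))

-- The set where `φ = 1` is a group; it contains a disc orthogonal to `ξ`, hence also a disc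
-- orthogonal to some `η ⟂ ξ`, and the sums of elements of the two discs cover a ball.
lemma IsCosTransform.eq_one_of_forall_disc {φ : E3 → ℝ} (hφ : IsCosTransform φ) {γ : ℝ}
    (hγ : 0 < γ) (hγ1 : γ ≤ 1)
    (hdisc : ∀ ξ ω : E3, ξ ≠ 0 → φ ξ = 1 → ⟪ξ, ω⟫ = 0 → ‖ω‖ < γ * ‖ξ‖ → φ ω = 1)
    {ξ : E3} (hξ0 : ξ ≠ 0) (hξ : φ ξ = 1) (x : E3) : φ x = 1 := by
  have hξpos := norm_pos_iff.2 hξ0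
  obtain ⟨e, he, hperp⟩ := exists_norm_eq_one_inner_eq_zero ξ
  set r := γ * ‖ξ‖ / 2
  have hr : 0 < r := by positivity
  have hre : ‖r • e‖ = r := by rw [norm_smul, he, mul_one, norm_of_nonneg hr.le]
  have hη : φ (r • e) = 1 := by
    refine hdisc ξ _ hξ0 hξ (by simp [real_inner_smul_right, hperp]) ?_
    rw [hre]
    exact half_lt_self (by positivity)
  have hrξ : r ≤ ‖ξ‖ := by
    linarith [mul_le_mul_of_nonneg_right hγ1 hξpos.le, show r = γ * ‖ξ‖ / 2 from rfl]
  refine hφ.eq_one_of_ball (mul_pos hγ hr) (fun y hy => ?_) x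
  have hpyth : ‖y‖ ^ 2 = ⟪e, y⟫ ^ 2 + ‖y - ⟪e, y⟫ • e‖ ^ 2 := by
    rw [norm_sub_sq_real, real_inner_smul_right, norm_smul, mul_pow, he, norm_eq_abs, sq_abs,
      real_inner_comm]
    ring
  have hpar : φ (⟪e, y⟫ • e) = 1 := by
    refine hdisc ξ _ hξ0 hξ (by simp [real_inner_smul_right, hperp]) ?_
    rw [norm_smul, he, mul_one, norm_eq_abs]
    refine lt_of_le_of_lt ?_ (hy.trans_le (mul_le_mul_of_nonneg_left hrξ hγ.le))
    simpa [he] using abs_real_inner_le_norm e y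
  have horth : φ (y - ⟪e, y⟫ • e) = 1 := by
    refine hdisc (r • e) _ (norm_pos_iff.1 (hr.trans_eq hre.symm)) hη ?_
      (hre.symm ▸ lt_of_le_of_lt ?_ hy)
    · rw [real_inner_smul_left, inner_sub_right, real_inner_smul_right, real_inner_self_eq_norm_sq,
        he]
      ring
    · exact le_of_sq_le_sq (by linarith [sq_nonneg ⟪e, y⟫]) (norm_nonneg y)
  simpa using hφ.add_eq_one hpar horth

lemma IsSubsolution.eq_one_of_eq_one (h : IsSubsolution b φ) (hb : ∀ x, 0 ≤ b x)
    (hk : KernelLowerBound b s k c₀) {t : ℝ} (ht : 0 < t) {ξ : E3} (hξ0 : ξ ≠ 0)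
    (hξ : φ t ξ = 1) (x : E3) : φ t x = 1 := by
  have hpos : 0 < 1 - c₀ ^ 2 := by nlinarith [hk.c₀_pos, hk.c₀_lt_one]
  refine (h.isCosTransform t ht.le).eq_one_of_forall_disc (sqrt_pos.2 hpos)
    (sqrt_le_one.2 (by linarith [sq_nonneg c₀])) (fun η ω hη0 hη hperp hω => ?_) hξ0 hξ x
  refine h.eq_one_of_inner_eq_zero hb hk ht hη0 hη hperp ?_
  rw [← sq_sqrt hpos.le, ← mul_pow]
  exact pow_lt_pow_left₀ hω (norm_nonneg ω) two_ne_zero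

lemma IsSubsolution.lt_one (h : IsSubsolution b φ) (hb : ∀ x, 0 ≤ b x)
    (hk : KernelLowerBound b s k c₀) {t : ℝ} (ht : 0 < t) (hlt : ∃ ξ, φ t ξ < 1) {ξ : E3}
    (hξ0 : ξ ≠ 0) : φ t ξ < 1 := by
  obtain ⟨x, hx⟩ := hlt
  exact (h.le_one ht.le ξ).lt_of_ne fun hξ => hx.ne (h.eq_one_of_eq_one hb hk ht hξ0 hξ x)

end UnitLevelSet

section Regularity

variable {b : ℝ → ℝ} {s k c₀ : ℝ} {φ : ℝ → E3 → ℝ}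

lemma IsSubsolution.continuousAt (h : IsSubsolution b φ) {t : ℝ} (ht : 0 < t) (ξ : E3) :
    ContinuousAt (fun p : ℝ × E3 => φ p.1 p.2) (t, ξ) :=
  h.cont.continuousAt (prod_mem_nhds (Ici_mem_nhds ht) univ_mem)

lemma isCompact_annulus (r R : ℝ) : IsCompact {ξ : E3 | r ≤ ‖ξ‖ ∧ ‖ξ‖ ≤ R} := by
  have hsub : {ξ : E3 | r ≤ ‖ξ‖ ∧ ‖ξ‖ ≤ R} ⊆ closedBall 0 R := fun ξ hξ => by simpa using hξ.2
  exact (isCompact_closedBall (0 : E3) R).of_isClosed_subset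
    ((isClosed_le continuous_const continuous_norm).inter
      (isClosed_le continuous_norm continuous_const)) hsub

lemma IsSubsolution.exists_mul_sq_le_one_sub (h : IsSubsolution b φ) (hb : ∀ x, 0 ≤ b x)
    (hk : KernelLowerBound b s k c₀) {t : ℝ} (ht : 0 < t) (hlt : ∃ ξ, φ t ξ < 1) :
    ∃ δ > 0, ∃ t₁ ∈ Ioo 0 t, ∀ τ ∈ Icc t₁ t, ∀ ξ, ‖ξ‖ ≤ 1 → δ * ‖ξ‖ ^ 2 ≤ 1 - φ τ ξ := by
  have hA := isCompact_annulus (1 / 2) 1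
  have hpos : ∀ ξ ∈ {ξ : E3 | 1 / 2 ≤ ‖ξ‖ ∧ ‖ξ‖ ≤ 1}, 0 < 1 - φ t ξ := fun ξ hξ =>
    sub_pos.2 (h.lt_one hb hk ht hlt (norm_pos_iff.1 (by linarith [hξ.1])))
  obtain ⟨m, hm, hmle⟩ := hA.exists_forall_le'
    (continuous_const.sub (h.isCosTransform t ht.le).continuous).continuousOn hpos
  have hev : ∀ᶠ τ in 𝓝 t, ∀ ξ ∈ {ξ : E3 | 1 / 2 ≤ ‖ξ‖ ∧ ‖ξ‖ ≤ 1}, m / 2 < 1 - φ τ ξ :=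
    hA.eventually_forall_of_forall_eventually fun ξ hξ =>
      (continuousAt_const.sub (h.continuousAt ht ξ)).eventually
        (lt_mem_nhds ((half_lt_self hm).trans_le (hmle ξ hξ)))
  obtain ⟨t₁, ht₁, hsub⟩ := mem_nhdsLE_iff_exists_Icc_subset.1
    (mem_nhdsWithin_of_mem_nhds (hev.and (Ioi_mem_nhds ht)))
  have ht₁0 : 0 < t₁ := (hsub (left_mem_Icc.2 ht₁.le)).2
  refine ⟨m / 2, half_pos hm, t₁, ⟨ht₁0, ht₁⟩, fun τ hτ ξ hξ =>
    (h.isCosTransform τ (ht₁0.le.trans hτ.1)).le_one_sub_of_annulus one_pos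
      (fun η hη hη1 => ?_) hξ⟩
  exact (mul_le_of_le_one_right (half_pos hm).le (pow_le_one₀ (norm_nonneg η) hη1)).trans
    ((hsub hτ).1 η ⟨hη, hη1⟩).le

lemma IsSubsolution.exists_half_le (h : IsSubsolution b φ) {τ T : ℝ} (hτ : 0 < τ) :
    ∃ r > 0, ∀ t ∈ Icc τ T, ∀ ξ, ‖ξ‖ ≤ r → 1 / 2 ≤ φ t ξ := by
  have hev : ∀ᶠ ξ in 𝓝 (0 : E3), ∀ t ∈ Icc τ T, 1 / 2 < φ t ξ := by
    refine isCompact_Icc.eventually_forall_of_forall_eventually fun t ht => ?_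
    have ht0 : 0 < t := hτ.trans_le ht.1
    have hcont : ContinuousAt (fun p : E3 × ℝ => φ p.2 p.1) (0, t) :=
      ContinuousAt.comp (x := ((0 : E3), t)) (g := fun p : ℝ × E3 => φ p.1 p.2) (f := Prod.swap)
        (h.continuousAt ht0 0) continuous_swap.continuousAt
    refine hcont.eventually (lt_mem_nhds ?_)
    norm_num [(h.isCosTransform t ht0.le).map_zero]
  obtain ⟨r, hr, hball⟩ := nhds_basis_closedBall.eventually_iff.1 hev
  exact ⟨r, hr, fun t ht ξ hξ => (hball (mem_closedBall_zero_iff.2 hξ) t ht).le⟩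

end Regularity

section Smoothing

/-- The profile `(1 + x) ^ s - 1`, where `x = ‖ξ‖ ^ 2`, of the decay exponents produced by a kernel
of singularity order `s`. -/
def smoothingWeight (s x : ℝ) : ℝ := (1 + x) ^ s - 1

lemma smoothingWeight_nonneg {s x : ℝ} (hs : 0 ≤ s) (hx : 0 ≤ x) : 0 ≤ smoothingWeight s x :=
  sub_nonneg.2 (one_le_rpow (by linarith) hs)

lemma smoothingWeight_le_self {s x : ℝ} (hs : s ≤ 1) (hx : 0 ≤ x) : smoothingWeight s x ≤ x := by
  have hle := rpow_le_rpow_of_exponent_le (by linarith : 1 ≤ 1 + x) hs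
  rw [rpow_one] at hle
  rw [smoothingWeight]
  linarith

lemma smoothingWeight_le_rpow {s x : ℝ} (hs0 : 0 ≤ s) (hs1 : s ≤ 1) (hx : 0 ≤ x) :
    smoothingWeight s x ≤ x ^ s := by
  have hle := rpow_add_le_add_rpow zero_le_one hx hs0 hs1
  rw [one_rpow] at hle
  rw [smoothingWeight]
  linarith

lemma smoothingWeight_add_le {s x y : ℝ} (hs0 : 0 ≤ s) (hs1 : s ≤ 1) (hx : 0 ≤ x) (hy : 0 ≤ y) :
    smoothingWeight s (x + y) ≤ smoothingWeight s x + smoothingWeight s y := by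
  rcases (add_nonneg hx hy).eq_or_lt with hxy | hxy
  · rw [← hxy, (add_eq_zero_iff_of_nonneg hx hy).1 hxy.symm |>.1,
      (add_eq_zero_iff_of_nonneg hx hy).1 hxy.symm |>.2]
    simp [smoothingWeight]
  have hchord : ∀ z, 0 ≤ z → z ≤ x + y →
      z / (x + y) * (1 + (x + y)) ^ s + (1 - z / (x + y)) ≤ (1 + z) ^ s := fun z hz hzxy => by
    have hconc := (concaveOn_rpow hs0 hs1).2 (x := 1 + (x + y)) (y := 1)
      (mem_Ici.2 (by linarith)) (mem_Ici.2 zero_le_one) (div_nonneg hz hxy.le)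
      (sub_nonneg.2 ((div_le_one hxy).2 hzxy)) (by ring)
    have hpt : z / (x + y) * (1 + (x + y)) + (1 - z / (x + y)) = 1 + z := by field_simp; ring
    simpa only [smul_eq_mul, one_rpow, mul_one, hpt] using hconc
  have hsum : x / (x + y) + y / (x + y) = 1 := by rw [← add_div, div_self hxy.ne']
  have hcomb := congr_arg (· * ((1 + (x + y)) ^ s - 1)) hsum
  simp only [smoothingWeight] at hcomb ⊢
  linarith [hchord x hx (by linarith), hchord y hy (by linarith)]

lemma smoothingWeight_le_xiPlus_add_xiMinus {s : ℝ} (hs0 : 0 ≤ s) (hs1 : s ≤ 1) (ξ : E3)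
    (σ : sphere (0 : E3) 1) :
    smoothingWeight s (‖ξ‖ ^ 2) ≤
      smoothingWeight s (‖xiPlus ξ σ‖ ^ 2) + smoothingWeight s (‖xiMinus ξ σ‖ ^ 2) := by
  have hsq : ‖xiPlus ξ σ‖ ^ 2 + ‖xiMinus ξ σ‖ ^ 2 = ‖ξ‖ ^ 2 := by
    rw [norm_xiPlus_sq, norm_xiMinus_sq]
    ring
  rw [← hsq]
  exact smoothingWeight_add_le hs0 hs1 (sq_nonneg _) (sq_nonneg _)

lemma continuous_smoothingWeight {s : ℝ} (hs : 0 ≤ s) : Continuous (smoothingWeight s) :=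
  ((continuous_const.add continuous_id).rpow_const fun _ => Or.inr hs).sub continuous_const

variable {b : ℝ → ℝ} {s k c₀ α δ : ℝ} {f : E3 → ℝ} {ξ : E3}

lemma le_exp_smoothingWeight (hs0 : 0 ≤ s) (hs1 : s ≤ 1) (hα : 0 ≤ α) (hαδ : α ≤ δ)
    (hξ : δ * ‖ξ‖ ^ 2 ≤ 1 - f ξ) : f ξ ≤ exp (-(α * smoothingWeight s (‖ξ‖ ^ 2))) := by
  refine le_trans ?_ (one_sub_le_exp_neg _)
  linarith [mul_le_mul hαδ (smoothingWeight_le_self hs1 (sq_nonneg ‖ξ‖))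
    (smoothingWeight_nonneg hs0 (sq_nonneg ‖ξ‖)) (hα.trans hαδ)]

lemma mul_le_exp_smoothingWeight (hs0 : 0 ≤ s) (hs1 : s ≤ 1) (hα : 0 ≤ α) (hf : ∀ η, 0 ≤ f η)
    (hbar : ∀ η, ‖η‖ ≤ ‖ξ‖ → f η ≤ exp (-(α * smoothingWeight s (‖η‖ ^ 2))))
    (σ : sphere (0 : E3) 1) :
    f (xiPlus ξ σ) * f (xiMinus ξ σ) ≤ exp (-(α * smoothingWeight s (‖ξ‖ ^ 2))) := by
  refine (mul_le_mul (hbar _ (norm_xiPlus_le ξ σ)) (hbar _ (norm_xiMinus_le ξ σ)) (hf _)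
    (exp_pos _).le).trans ?_
  have hsub := smoothingWeight_le_xiPlus_add_xiMinus hs0 hs1 ξ σ
  rw [← exp_add, exp_le_exp]
  linarith [mul_le_mul_of_nonneg_left hsub hα]

lemma mul_le_exp_smoothingWeight_sub (hs0 : 0 ≤ s) (hs1 : s ≤ 1) (hα : 0 ≤ α) (hαδ : α ≤ δ / 2)
    (hf : ∀ η, 0 ≤ f η) (hball : ∀ η, ‖η‖ ≤ 1 → δ * ‖η‖ ^ 2 ≤ 1 - f η)
    (hbar : ∀ η, ‖η‖ ≤ ‖ξ‖ → f η ≤ exp (-(α * smoothingWeight s (‖η‖ ^ 2))))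
    {σ : sphere (0 : E3) 1} (hσ : ‖xiMinus ξ σ‖ ≤ 1) :
    f (xiPlus ξ σ) * f (xiMinus ξ σ) ≤
      exp (-(α * smoothingWeight s (‖ξ‖ ^ 2)) - δ / 2 * ‖xiMinus ξ σ‖ ^ 2) := by
  have hminus : f (xiMinus ξ σ) ≤ exp (-(δ * ‖xiMinus ξ σ‖ ^ 2)) :=
    (by linarith [hball _ hσ] : f (xiMinus ξ σ) ≤ 1 - δ * ‖xiMinus ξ σ‖ ^ 2).trans
      (one_sub_le_exp_neg _)
  refine (mul_le_mul (hbar _ (norm_xiPlus_le ξ σ)) hminus (hf _) (exp_pos _).le).trans ?_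
  have hsub := smoothingWeight_le_xiPlus_add_xiMinus hs0 hs1 ξ σ
  rw [← exp_add, exp_le_exp]
  have hself := smoothingWeight_le_self hs1 (sq_nonneg ‖xiMinus ξ σ‖)
  linarith [mul_le_mul_of_nonneg_left (hsub.trans (add_le_add_right hself _)) hα,
    mul_le_mul_of_nonneg_right hαδ (sq_nonneg ‖xiMinus ξ σ‖)]

/-- The constant in front of `‖ξ‖ ^ (2 * s)` in the dissipation rate: `(1 - c₀) / 2` is the
deviation scale, relative to `‖ξ‖⁻²`, of the grazing collisions that are taken into account. -/
def dissipationRate (s k c₀ δ : ℝ) : ℝ :=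
  3 / 256 * k * ((1 - c₀) / 2) ^ (-s) * (1 - exp (-(δ * ((1 - c₀) / 2) / 256)))

lemma KernelLowerBound.dissipationRate_pos (hk : KernelLowerBound b s k c₀) (hδ : 0 < δ) :
    0 < dissipationRate s k c₀ δ := by
  have hp : 0 < (1 - c₀) / 2 := half_pos (sub_pos.2 hk.c₀_lt_one)
  have hexp : exp (-(δ * ((1 - c₀) / 2) / 256)) < 1 :=
    exp_lt_one_iff.2 (neg_lt_zero.2 (by positivity))
  have := hk.k_pos
  have := sub_pos.2 hexp
  unfold dissipationRate
  positivity

lemma KernelLowerBound.le_of_mem_deviationBand (hk : KernelLowerBound b s k c₀) (hs : 0 ≤ s)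
    {a : ℝ} (ha : 0 < a) (hac : a < 1 - c₀) {σ : sphere (0 : E3) 1} (hσ : σ ∈ deviationBand ξ a) :
    k * a ^ (-(1 + s)) ≤ b (cosDev ξ σ) := by
  have hpos : 0 < 1 - cosDev ξ σ := (by positivity : 0 < a / 64).trans_le hσ.1
  exact (mul_le_mul_of_nonneg_left (rpow_le_rpow_of_nonpos hpos hσ.2 (by linarith))
    hk.k_pos.le).trans (hk.le _ (by linarith [hσ.2]) (by linarith))

lemma mul_sub_le_of_mem_deviationBand (hs0 : 0 ≤ s) (hs1 : s ≤ 1) (hα : 0 ≤ α)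
    (hαδ : α ≤ δ / 2) (hf : ∀ η, 0 ≤ f η) (hball : ∀ η, ‖η‖ ≤ 1 → δ * ‖η‖ ^ 2 ≤ 1 - f η)
    (hξ : ξ ≠ 0) (hbar : ∀ η, ‖η‖ ≤ ‖ξ‖ → f η ≤ exp (-(α * smoothingWeight s (‖η‖ ^ 2))))
    (htouch : f ξ = exp (-(α * smoothingWeight s (‖ξ‖ ^ 2)))) {p : ℝ} (hp : p ≤ 2)
    {σ : sphere (0 : E3) 1} (hσ : σ ∈ deviationBand ξ (p / ‖ξ‖ ^ 2)) :
    f (xiPlus ξ σ) * f (xiMinus ξ σ) - f ξ ≤ -(f ξ * (1 - exp (-(δ * p / 256)))) := by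
  have hδ : 0 ≤ δ := by linarith
  have hcancel : ‖ξ‖ ^ 2 * (p / ‖ξ‖ ^ 2) = p :=
    mul_div_cancel₀ p (pow_ne_zero 2 (norm_ne_zero_iff.2 hξ))
  have hlow : p / 128 ≤ ‖xiMinus ξ σ‖ ^ 2 := by
    rw [norm_xiMinus_sq]
    linarith [mul_le_mul_of_nonneg_left hσ.1 (sq_nonneg ‖ξ‖)]
  have hup : ‖xiMinus ξ σ‖ ^ 2 ≤ 1 := by
    rw [norm_xiMinus_sq]
    linarith [mul_le_mul_of_nonneg_left hσ.2 (sq_nonneg ‖ξ‖)]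
  have hmul := mul_le_exp_smoothingWeight_sub hs0 hs1 hα hαδ hf hball hbar
    ((sq_le_one_iff₀ (norm_nonneg _)).1 hup)
  rw [sub_eq_add_neg, exp_add, ← htouch] at hmul
  have hexp : exp (-(δ / 2 * ‖xiMinus ξ σ‖ ^ 2)) ≤ exp (-(δ * p / 256)) :=
    exp_le_exp.2 (by linarith [mul_le_mul_of_nonneg_left hlow hδ])
  linarith [mul_le_mul_of_nonneg_left hexp (hf ξ)]

/-- At a touching point the grazing collisions with `‖ξ⁻‖` of order one, whose rate is of order
`‖ξ‖ ^ (2 * s)`, each lose a fixed proportion. -/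
lemma integral_le_neg_dissipationRate_mul (hk : KernelLowerBound b s k c₀) (hb : ∀ x, 0 ≤ b x)
    (hs0 : 0 ≤ s) (hs1 : s ≤ 1) (hα : 0 ≤ α) (hαδ : α ≤ δ / 2) (hf : ∀ η, 0 ≤ f η)
    (hball : ∀ η, ‖η‖ ≤ 1 → δ * ‖η‖ ^ 2 ≤ 1 - f η) (hξ : 1 ≤ ‖ξ‖)
    (hbar : ∀ η, ‖η‖ ≤ ‖ξ‖ → f η ≤ exp (-(α * smoothingWeight s (‖η‖ ^ 2))))
    (htouch : f ξ = exp (-(α * smoothingWeight s (‖ξ‖ ^ 2))))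
    (hint : Integrable (realCollisionIntegrand b f ξ) sphμ) :
    ∫ σ, realCollisionIntegrand b f ξ σ ∂sphμ ≤
      -(dissipationRate s k c₀ δ * (‖ξ‖ ^ 2) ^ s * f ξ) := by
  set p : ℝ := (1 - c₀) / 2 with hp
  set A : ℝ := 1 - exp (-(δ * p / 256))
  have hk0 := hk.k_pos.le
  have hp0 : 0 < p := half_pos (sub_pos.2 hk.c₀_lt_one)
  have hp1 : p < 1 / 2 := by linarith [hk.c₀_pos]
  have ha : 0 < p / ‖ξ‖ ^ 2 := by positivity
  have hap : p / ‖ξ‖ ^ 2 ≤ p := div_le_self hp0.le (one_le_pow₀ hξ)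
  have hξ0 : ξ ≠ 0 := norm_pos_iff.1 (one_pos.trans_le hξ)
  have hδ : 0 ≤ δ := by linarith
  have hA0 : 0 ≤ A := sub_nonneg.2 (exp_le_one_iff.2 (neg_nonpos.2 (by positivity)))
  have hfA : 0 ≤ f ξ * A := mul_nonneg (hf ξ) hA0
  have hbound := integral_le_neg_mul_of_le_on hint (measurableSet_deviationBand ξ _)
    (v := k * (p / ‖ξ‖ ^ 2) ^ (-(1 + s)) * (f ξ * A)) (by positivity)
    (le_measureReal_deviationBand ha (by linarith) hξ0)
    (fun σ => mul_nonpos_of_nonneg_of_nonpos (hb _)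
      (by linarith [mul_le_exp_smoothingWeight hs0 hs1 hα hf hbar σ])) fun σ hσ => by
      rw [realCollisionIntegrand, ← neg_le_neg_iff, neg_neg, ← mul_neg]
      exact mul_le_mul (hk.le_of_mem_deviationBand hs0 ha (by linarith) hσ)
        (le_neg_of_le_neg (mul_sub_le_of_mem_deviationBand hs0 hs1 hα hαδ hf hball hξ0 hbar htouch
          (by linarith) hσ)) hfA (hb _)
  have hscale : (p / ‖ξ‖ ^ 2) ^ (-(1 + s)) * (p / ‖ξ‖ ^ 2) = p ^ (-s) * (‖ξ‖ ^ 2) ^ s := by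
    rw [← rpow_add_one ha.ne', div_rpow hp0.le (sq_nonneg _), neg_add_rev, neg_add_cancel_right,
      rpow_neg (sq_nonneg _), div_inv_eq_mul]
  refine hbound.trans_eq ?_
  rw [dissipationRate]
  linear_combination -(3 / 256 * k * (f ξ * A)) * hscale

variable {φ : ℝ → E3 → ℝ}

lemma IsSubsolution.le_exp_smoothingWeight_of_norm_le (h : IsSubsolution b φ)
    (hb : ∀ x, 0 ≤ b x) (hk : KernelLowerBound b s k c₀) (hs0 : 0 < s) (hs1 : s ≤ 1) (hδ : 0 < δ)
    {t₁ T β : ℝ} (ht₁ : 0 < t₁) (hT : t₁ ≤ T)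
    (hball : ∀ t ∈ Icc t₁ T, ∀ ξ, ‖ξ‖ ≤ 1 → δ * ‖ξ‖ ^ 2 ≤ 1 - φ t ξ) (hβ : 0 ≤ β)
    (hβT : β * (T - t₁) ≤ δ / 2) (hβδ : β < dissipationRate s k c₀ δ) (R : ℝ) :
    ∀ t ∈ Icc t₁ T, ∀ ξ ∈ {ξ : E3 | 1 ≤ ‖ξ‖ ∧ ‖ξ‖ ≤ R},
      φ t ξ - exp (-(β * (t - t₁) * smoothingWeight s (‖ξ‖ ^ 2))) < 0 := by
  have hwcont := continuous_smoothingWeight hs0.le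
  refine neg_of_forall_touch (isCompact_annulus 1 R)
    (u := fun t ξ => φ t ξ - exp (-(β * (t - t₁) * smoothingWeight s (‖ξ‖ ^ 2)))) ?_ ?_ ?_
  · refine (h.cont.mono (prod_mono (fun t ht => ht₁.le.trans ht.1) (subset_univ _))).sub ?_
    fun_prop
  · intro ξ hξ
    obtain ⟨e, he⟩ := exists_norm_eq E3 zero_le_one
    have hlt : φ t₁ e < 1 := by
      linarith [hball t₁ (left_mem_Icc.2 hT) e he.le, mul_pos hδ (by simp [he] : 0 < ‖e‖ ^ 2)]
    simpa using h.lt_one hb hk ht₁ ⟨e, hlt⟩ (norm_pos_iff.1 (one_pos.trans_le hξ.1))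
  · intro t ht ξ hξ hle htouch
    have htI : t ∈ Icc t₁ T := Ioc_subset_Icc_self ht
    have ht0 : 0 < t := ht₁.trans ht.1
    have hα : 0 ≤ β * (t - t₁) := mul_nonneg hβ (sub_nonneg.2 htI.1)
    have hαδ : β * (t - t₁) ≤ δ / 2 :=
      (mul_le_mul_of_nonneg_left (sub_le_sub_right ht.2 t₁) hβ).trans hβT
    have hbar : ∀ η, ‖η‖ ≤ ‖ξ‖ →
        φ t η ≤ exp (-(β * (t - t₁) * smoothingWeight s (‖η‖ ^ 2))) := fun η hη => by
      obtain hη1 | hη1 := le_total 1 ‖η‖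
      · exact sub_nonpos.1 (hle η ⟨hη1, hη.trans hξ.2⟩)
      · exact le_exp_smoothingWeight hs0.le hs1 hα (hαδ.trans (half_le_self hδ.le))
          (hball t htI η hη1)
    have hpos : 0 < φ t ξ := (sub_eq_zero.1 htouch).symm ▸ exp_pos _
    have hdiss := integral_le_neg_dissipationRate_mul hk hb hs0.le hs1 hα hαδ (h.nonneg t ht0.le)
      (hball t htI) hξ.1 hbar (sub_eq_zero.1 htouch) (h.integrable t ht0.le ξ)
    obtain ⟨d, hd, hderiv⟩ := h.deriv_le t ht0 ξ
    have hexp : HasDerivAt (fun τ => exp (-(β * (τ - t₁) * smoothingWeight s (‖ξ‖ ^ 2))))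
        (φ t ξ * -(β * 1 * smoothingWeight s (‖ξ‖ ^ 2))) t := by
      rw [sub_eq_zero.1 htouch]
      exact (((((hasDerivAt_id t).sub_const t₁).const_mul β).mul_const _).neg).exp
    refine ⟨_, ?_, hderiv.sub hexp⟩
    have hxs : 0 < (‖ξ‖ ^ 2) ^ s := rpow_pos_of_pos (by nlinarith [hξ.1]) s
    have hw := mul_le_mul_of_nonneg_left (smoothingWeight_le_rpow hs0.le hs1 (sq_nonneg ‖ξ‖)) hβ
    nlinarith [mul_pos hpos (mul_pos (sub_pos.2 hβδ) hxs), mul_le_mul_of_nonneg_left hw hpos.le]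

lemma IsSubsolution.exists_le_exp_smoothingWeight (h : IsSubsolution b φ)
    (hb : ∀ x, 0 ≤ b x) (hk : KernelLowerBound b s k c₀) (hs0 : 0 < s) (hs1 : s ≤ 1)
    {T : ℝ} (hT : 0 < T) (hlt : ∃ ξ, φ T ξ < 1) :
    ∃ a > 0, ∀ ξ, φ T ξ ≤ exp (-(a * smoothingWeight s (‖ξ‖ ^ 2))) := by
  obtain ⟨δ, hδ, t₁, ⟨ht₁, ht₁T⟩, hball⟩ := h.exists_mul_sq_le_one_sub hb hk hT hlt
  have hrate := hk.dissipationRate_pos hδ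
  have hlen : 0 < T - t₁ := sub_pos.2 ht₁T
  set β : ℝ := min (δ / 2 / (T - t₁)) (dissipationRate s k c₀ δ / 2)
  have hβ : 0 < β := lt_min (by positivity) (half_pos hrate)
  have hβT : β * (T - t₁) ≤ δ / 2 := (le_div_iff₀ hlen).1 (min_le_left _ _)
  have hTI : T ∈ Icc t₁ T := right_mem_Icc.2 ht₁T.le
  refine ⟨β * (T - t₁), mul_pos hβ hlen, fun ξ => ?_⟩
  obtain hξ | hξ := le_total 1 ‖ξ‖
  · exact (sub_neg.1 (h.le_exp_smoothingWeight_of_norm_le hb hk hs0 hs1 hδ ht₁ ht₁T.le hball hβ.le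
      hβT ((min_le_right _ _).trans_lt (half_lt_self hrate)) ‖ξ‖ T hTI ξ ⟨hξ, le_rfl⟩)).le
  · exact le_exp_smoothingWeight hs0.le hs1 (mul_pos hβ hlen).le
      (hβT.trans (half_le_self hδ.le)) (hball T hTI ξ hξ)

end Smoothing

section FiniteMomentumTransfer

/-- The momentum transfer cross section of the kernel `b` is finite: the case in which
nondegeneracy is propagated by a Grönwall-type barrier. -/
def FiniteMomentumTransfer (b : ℝ → ℝ) : Prop :=
  ∀ ξ : E3, ξ ≠ 0 → Integrable (fun σ => b (cosDev ξ σ) * (1 - cosDev ξ σ ^ 2)) sphμ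

variable {b : ℝ → ℝ} {s k c₀ κ : ℝ} {f : E3 → ℝ} {ξ : E3} {φ : ℝ → E3 → ℝ}

lemma norm_xiPlus_sq_mul_norm_xiMinus_sq (ξ : E3) (σ : sphere (0 : E3) 1) :
    ‖xiPlus ξ σ‖ ^ 2 * ‖xiMinus ξ σ‖ ^ 2 = ‖ξ‖ ^ 4 / 4 * (1 - cosDev ξ σ ^ 2) := by
  rw [norm_xiPlus_sq, norm_xiMinus_sq]
  ring

lemma integral_le_of_touch_quadratic (hb : ∀ x, 0 ≤ b x) (hfin : FiniteMomentumTransfer b)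
    (hξ0 : ξ ≠ 0) (hf : ∀ η, 0 ≤ f η)
    (hbar : ∀ η, ‖η‖ ≤ ‖ξ‖ → κ * ‖η‖ ^ 2 ≤ 1 - f η) (htouch : κ * ‖ξ‖ ^ 2 = 1 - f ξ)
    (hint : Integrable (realCollisionIntegrand b f ξ) sphμ) :
    ∫ σ, realCollisionIntegrand b f ξ σ ∂sphμ ≤
      κ ^ 2 * ‖ξ‖ ^ 4 / 4 * ∫ σ, b (cosDev ξ σ) * (1 - cosDev ξ σ ^ 2) ∂sphμ := by
  rw [← integral_const_mul]
  refine integral_mono hint ((hfin ξ hξ0).const_mul _) fun σ => ?_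
  have hplus := hbar _ (norm_xiPlus_le ξ σ)
  have hminus := hbar _ (norm_xiMinus_le ξ σ)
  have hprod : f (xiPlus ξ σ) * f (xiMinus ξ σ) ≤
      (1 - κ * ‖xiPlus ξ σ‖ ^ 2) * (1 - κ * ‖xiMinus ξ σ‖ ^ 2) :=
    mul_le_mul (by linarith) (by linarith) (hf _) (by linarith [hf (xiPlus ξ σ)])
  have hsum : κ * ‖xiPlus ξ σ‖ ^ 2 + κ * ‖xiMinus ξ σ‖ ^ 2 = κ * ‖ξ‖ ^ 2 := by
    rw [norm_xiPlus_sq, norm_xiMinus_sq]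
    ring
  have hcross : κ ^ 2 * (‖xiPlus ξ σ‖ ^ 2 * ‖xiMinus ξ σ‖ ^ 2) =
      κ ^ 2 * (‖ξ‖ ^ 4 / 4 * (1 - cosDev ξ σ ^ 2)) := by
    rw [norm_xiPlus_sq_mul_norm_xiMinus_sq]
  rw [realCollisionIntegrand, mul_left_comm]
  exact mul_le_mul_of_nonneg_left (by linarith) (hb _)

lemma hasDerivAt_mul_exp_neg (κ β τ t : ℝ) :
    HasDerivAt (fun t => κ * exp (-(β * (t - τ)))) (-β * (κ * exp (-(β * (t - τ))))) t := by
  have hexp := ((((hasDerivAt_id' t).sub_const τ).const_mul β).fun_neg.exp).const_mul κ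
  exact hexp.congr_deriv (by ring)

lemma IsSubsolution.mul_exp_mul_sq_lt_one_sub (h : IsSubsolution b φ) (hb : ∀ x, 0 ≤ b x)
    (hfin : FiniteMomentumTransfer b) {I : ℝ} (hI0 : 0 ≤ I)
    (hI : ∀ ξ ≠ 0, ∫ σ, b (cosDev ξ σ) * (1 - cosDev ξ σ ^ 2) ∂sphμ ≤ I) (hκ : 0 < κ)
    {β : ℝ} (hβ : κ * I < β) {τ T : ℝ} (hτ : 0 < τ)
    (hinit : ∀ ξ ∈ {ξ : E3 | 1 / 2 ≤ ‖ξ‖ ∧ ‖ξ‖ ≤ 1}, κ * ‖ξ‖ ^ 2 < 1 - φ τ ξ) :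
    ∀ t ∈ Icc τ T, ∀ ξ ∈ {ξ : E3 | 1 / 2 ≤ ‖ξ‖ ∧ ‖ξ‖ ≤ 1},
      κ * exp (-(β * (t - τ))) * ‖ξ‖ ^ 2 - (1 - φ t ξ) < 0 := by
  have hβ0 : 0 < β := (mul_nonneg hκ.le hI0).trans_lt hβ
  refine neg_of_forall_touch (isCompact_annulus (1 / 2) 1)
    (u := fun t ξ => κ * exp (-(β * (t - τ))) * ‖ξ‖ ^ 2 - (1 - φ t ξ)) ?_ ?_ ?_
  · exact Continuous.continuousOn (by fun_prop) |>.sub (continuousOn_const.sub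
      (h.cont.mono (prod_mono (fun t ht => hτ.le.trans ht.1) (subset_univ _))))
  · intro ξ hξ
    simpa using hinit ξ hξ
  · intro t ht ξ hξ hle htouch
    set κt : ℝ := κ * exp (-(β * (t - τ)))
    have ht0 : 0 < t := hτ.trans ht.1
    have hκt : 0 < κt := mul_pos hκ (exp_pos _)
    have hκt_le : κt ≤ κ := mul_le_of_le_one_right hκ.le
      (exp_le_one_iff.2 (neg_nonpos.2 (mul_nonneg hβ0.le (sub_nonneg.2 ht.1.le))))
    have hξ0 : ξ ≠ 0 := norm_pos_iff.1 (one_half_pos.trans_le hξ.1)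
    have hbar : ∀ η, ‖η‖ ≤ ‖ξ‖ → κt * ‖η‖ ^ 2 ≤ 1 - φ t η := fun η hη =>
      (h.isCosTransform t ht0.le).le_one_sub_of_annulus one_pos
        (fun ζ hζ hζ1 => sub_nonpos.1 (hle ζ ⟨hζ, hζ1⟩)) (hη.trans hξ.2)
    have hgain := integral_le_of_touch_quadratic hb hfin hξ0 (h.nonneg t ht0.le) hbar
      (sub_eq_zero.1 htouch) (h.integrable t ht0.le ξ)
    obtain ⟨d, hd, hderiv⟩ := h.deriv_le t ht0 ξ
    refine ⟨_, ?_, ((hasDerivAt_mul_exp_neg κ β τ t).mul_const _).sub (hderiv.const_sub 1)⟩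
    have hxpos : 0 < ‖ξ‖ ^ 2 := by have := norm_pos_iff.2 hξ0; positivity
    have hfour : κt ^ 2 * ‖ξ‖ ^ 4 / 4 * ∫ σ, b (cosDev ξ σ) * (1 - cosDev ξ σ ^ 2) ∂sphμ ≤
        κt * ‖ξ‖ ^ 2 * (κ * I) := by
      calc _ ≤ κt ^ 2 * ‖ξ‖ ^ 4 / 4 * I := by gcongr; exact hI ξ hξ0
        _ = κt * ‖ξ‖ ^ 2 * (κt * (‖ξ‖ ^ 2 / 4) * I) := by ring
        _ ≤ κt * ‖ξ‖ ^ 2 * (κ * 1 * I) := by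
          gcongr
          linarith [pow_le_one₀ (norm_nonneg ξ) hξ.2 (n := 2)]
        _ = _ := by rw [mul_one]
    linarith [mul_lt_mul_of_pos_left hβ (mul_pos hκt hxpos)]

lemma IsSubsolution.exists_lt_one_of_finiteMomentumTransfer (h : IsSubsolution b φ)
    (hbm : Measurable b) (hb : ∀ x, 0 ≤ b x) (hk : KernelLowerBound b s k c₀)
    (hfin : FiniteMomentumTransfer b) {τ T : ℝ} (hτ : 0 < τ) (hτT : τ ≤ T)
    (hlt : ∃ ξ, φ τ ξ < 1) : ∃ ξ, φ T ξ < 1 := by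
  obtain ⟨δ, hδ, t₁, ht₁, hball⟩ := h.exists_mul_sq_le_one_sub hb hk hτ hlt
  obtain ⟨e, he⟩ := exists_norm_eq E3 zero_le_one
  have he0 : e ≠ 0 := norm_pos_iff.1 (one_pos.trans_eq he.symm)
  set I : ℝ := ∫ σ, b (cosDev e σ) * (1 - cosDev e σ ^ 2) ∂sphμ
  have hI0 : 0 ≤ I := integral_nonneg fun σ =>
    mul_nonneg (hb _) (sub_nonneg.2 (cosDev_sq_le_one e σ))
  have hI : ∀ ξ ≠ 0, ∫ σ, b (cosDev ξ σ) * (1 - cosDev ξ σ ^ 2) ∂sphμ ≤ I := fun ξ hξ =>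
    (integral_zonal_eq (g := fun c => b c * (1 - c ^ 2)) (by fun_prop) hξ he0).le
  have hneg := h.mul_exp_mul_sq_lt_one_sub hb hfin hI0 hI (half_pos hδ)
    (lt_add_one (δ / 2 * I)) hτ (T := T) (fun ξ hξ => by
      have hsq : 0 < ‖ξ‖ ^ 2 := pow_pos (one_half_pos.trans_le hξ.1) 2
      linarith [hball τ (right_mem_Icc.2 ht₁.2.le) ξ hξ.2, mul_pos hδ hsq])
    T (right_mem_Icc.2 hτT) e (by norm_num [he])
  rw [he, one_pow, mul_one] at hneg
  exact ⟨e, by linarith [mul_pos (half_pos hδ) (exp_pos (-((δ / 2 * I + 1) * (T - τ))))]⟩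

end FiniteMomentumTransfer

section Defect

/-- The failure of `F` to be additive along the collision `ξ ↦ (ξ⁺, ξ⁻)`. -/
def defect (F : E3 → ℝ) (ξ : E3) (σ : sphere (0 : E3) 1) : ℝ :=
  F (xiPlus ξ σ) + F (xiMinus ξ σ) - F ξ

lemma defect_const_mul_norm_sq (m : ℝ) (ξ : E3) (σ : sphere (0 : E3) 1) :
    defect (fun η => m * ‖η‖ ^ 2) ξ σ = 0 := by
  rw [defect, norm_xiPlus_sq, norm_xiMinus_sq]
  ring

lemma defect_const_mul_norm_pow_four (c : ℝ) (ξ : E3) (σ : sphere (0 : E3) 1) :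
    defect (fun η => c * ‖η‖ ^ 4) ξ σ = -(c * ‖ξ‖ ^ 4 / 2 * (1 - cosDev ξ σ ^ 2)) := by
  have hpow : ∀ x : E3, ‖x‖ ^ 4 = (‖x‖ ^ 2) ^ 2 := fun x => by ring
  rw [defect, hpow, hpow (xiMinus ξ σ), norm_xiPlus_sq, norm_xiMinus_sq]
  ring

/-- Even after averaging over finitely many rotations about the axis `ξ`, the defect of `F` does not
dominate `1 - cosDev ξ σ ^ 2`. A kernel with infinite momentum transfer forces this on `-log φ`. -/
def HasSmallDefect (F : E3 → ℝ) (r : ℝ) : Prop :=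
  ∀ ⦃ξ : E3⦄, ξ ≠ 0 → ‖ξ‖ ≤ r → ∀ (n : ℕ) (R : Fin n → E3 ≃ₗᵢ[ℝ] E3), (∀ i, R i ξ = ξ) →
    ∀ c > 0, ¬ ∀ σ, c * (1 - cosDev ξ σ ^ 2) ≤ ∑ i, |defect F ξ (rotateSphere (R i) σ)|

variable {b : ℝ → ℝ} {φ F G : E3 → ℝ} {r : ℝ} {ξ : E3}

lemma HasSmallDefect.neg (hF : HasSmallDefect F r) : HasSmallDefect (fun ξ => -F ξ) r := by
  have hdefect : ∀ ξ σ, |defect (fun ξ => -F ξ) ξ σ| = |defect F ξ σ| := fun ξ σ => by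
    rw [← abs_neg, defect, defect]
    ring_nf
  intro ξ hξ hξr n R hR c hc hle
  simp only [hdefect] at hle
  exact hF hξ hξr n R hR c hc hle

lemma abs_div_three_le_abs_exp_neg_sub_one {z : ℝ} (hz : z ≤ 2) : |z| / 3 ≤ |exp (-z) - 1| := by
  obtain hz0 | hz0 := le_total 0 z
  · have hexp : exp (-z) ≤ 1 - z / 3 := by
      rw [exp_neg, inv_le_comm₀ (exp_pos _) (by linarith)]
      refine le_trans ?_ (add_one_le_exp z)
      rw [inv_le_iff_one_le_mul₀ (by linarith)]
      nlinarith
    rw [abs_of_nonneg hz0, abs_of_nonpos (by linarith)]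
    linarith
  · have hexp := add_one_le_exp (-z)
    rw [abs_of_nonpos hz0, abs_of_nonneg (by linarith)]
    linarith

lemma abs_defect_neg_log_le (hhalf : ∀ η, ‖η‖ ≤ r → 1 / 2 ≤ φ η) (hle : ∀ η, φ η ≤ 1)
    (hξ : ‖ξ‖ ≤ r) (σ : sphere (0 : E3) 1) :
    |defect (fun η => -log (φ η)) ξ σ| ≤ 6 * |φ (xiPlus ξ σ) * φ (xiMinus ξ σ) - φ ξ| := by
  have hpos : ∀ η, ‖η‖ ≤ r → 0 < φ η := fun η hη => one_half_pos.trans_le (hhalf η hη)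
  have hplus := (norm_xiPlus_le ξ σ).trans hξ
  have hminus := (norm_xiMinus_le ξ σ).trans hξ
  have hlog : ∀ η, ‖η‖ ≤ r → -log (φ η) ≤ 1 := fun η hη => by
    have hlog_le := log_le_log one_half_pos (hhalf η hη)
    rw [one_div, log_inv] at hlog_le
    linarith [log_two_lt_d9]
  have hz : defect (fun η => -log (φ η)) ξ σ ≤ 2 := by
    rw [defect]
    linarith [hlog _ hplus, hlog _ hminus, log_nonpos (hpos ξ hξ).le (hle ξ)]
  have hfactor : φ (xiPlus ξ σ) * φ (xiMinus ξ σ) - φ ξ =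
      φ ξ * (exp (-defect (fun η => -log (φ η)) ξ σ) - 1) := by
    have hexp : -defect (fun η => -log (φ η)) ξ σ =
        log (φ (xiPlus ξ σ)) + log (φ (xiMinus ξ σ)) - log (φ ξ) := by
      rw [defect]
      ring
    rw [hexp, exp_sub, exp_add, exp_log (hpos _ hplus), exp_log (hpos _ hminus),
      exp_log (hpos ξ hξ), mul_sub, mul_div_cancel₀ _ (hpos ξ hξ).ne', mul_one]
  rw [hfactor, abs_mul, abs_of_pos (hpos ξ hξ)]
  linarith [abs_div_three_le_abs_exp_neg_sub_one hz,
    mul_le_mul_of_nonneg_right (hhalf ξ hξ)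
      (abs_nonneg (exp (-defect (fun η => -log (φ η)) ξ σ) - 1))]

lemma hasSmallDefect_neg_log (hbm : Measurable b) (hb : ∀ x, 0 ≤ b x)
    (hnot : ¬ FiniteMomentumTransfer b) (hhalf : ∀ η, ‖η‖ ≤ r → 1 / 2 ≤ φ η)
    (hle : ∀ η, φ η ≤ 1) (hint : ∀ ξ, Integrable (realCollisionIntegrand b φ ξ) sphμ) :
    HasSmallDefect (fun η => -log (φ η)) r := by
  intro ξ hξ hξr n R hR c hc hdom
  refine hnot fun η hη => integrable_zonal (g := fun c => b c * (1 - c ^ 2)) hη hξ ?_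
  have hsum : Integrable
      (fun σ => ∑ i, |realCollisionIntegrand b φ ξ (rotateSphere (R i) σ)|) sphμ :=
    integrable_finsetSum _ fun i _ =>
      ((measurePreserving_rotateSphere (R i)).integrable_comp_of_integrable (hint ξ)).abs
  have hmeas : Measurable fun σ => b (cosDev ξ σ) * (1 - cosDev ξ σ ^ 2) :=
    (by fun_prop : Measurable fun c => b c * (1 - c ^ 2)).comp (continuous_cosDev ξ).measurable
  refine (hsum.const_mul (6 / c)).mono' hmeas.aestronglyMeasurable (ae_of_all _ fun σ => ?_)
  have hcos : ∀ i, cosDev ξ (rotateSphere (R i) σ) = cosDev ξ σ := fun i => by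
    conv_lhs => rw [← hR i]
    exact cosDev_rotateSphere (R i) ξ σ
  simp only [realCollisionIntegrand, hcos, abs_mul, abs_of_nonneg (hb _)]
  rw [norm_of_nonneg (mul_nonneg (hb _) (sub_nonneg.2 (cosDev_sq_le_one ξ σ))), ← Finset.mul_sum,
    mul_left_comm]
  refine mul_le_mul_of_nonneg_left ?_ (hb _)
  rw [div_mul_eq_mul_div, le_div_iff₀' hc, Finset.mul_sum]
  exact (hdom σ).trans (Finset.sum_le_sum fun i _ => abs_defect_neg_log_le hhalf hle hξr _)

/-- The touching point minimises `(F - G) / ‖·‖ ^ 2`; subtracting a multiple of `‖·‖ ^ 2`, which has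
no defect, makes `G` touch `F` from below there. -/
lemma exists_defect_le_defect (hF : ContinuousOn F (closedBall 0 r))
    (hG : ContinuousOn G (closedBall 0 r)) (hnear : ∀ᶠ ξ in 𝓝 0, G ξ ≤ F ξ) {ξ₁ : E3}
    (hξ₁ : ‖ξ₁‖ ≤ r) (hlt : F ξ₁ < G ξ₁) :
    ∃ ξ ≠ 0, ‖ξ‖ ≤ r ∧ F ξ < G ξ ∧ ∀ σ, defect G ξ σ ≤ defect F ξ σ := by
  obtain ⟨ρ, hρ, hball⟩ := eventually_nhds_iff_ball.1 hnear
  set K : Set E3 := closedBall 0 r \ ball 0 ρ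
  have hK0 : ∀ η ∈ K, ‖η‖ ^ 2 ≠ 0 := fun η hη =>
    pow_ne_zero 2 (hρ.trans_le (by simpa using hη.2)).ne'
  have hξ₁K : ξ₁ ∈ K := ⟨mem_closedBall_zero_iff.2 hξ₁, fun h => (hball _ h).not_gt hlt⟩
  obtain ⟨ξ, hξ, hmin⟩ := ((isCompact_closedBall 0 r).diff isOpen_ball).exists_isMinOn ⟨ξ₁, hξ₁K⟩
    (f := fun η => (F η - G η) / ‖η‖ ^ 2)
    (((hF.sub hG).mono sdiff_subset).div (by fun_prop) hK0)
  set ν : ℝ := (F ξ - G ξ) / ‖ξ‖ ^ 2 with hν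
  have hξν : F ξ - G ξ = ν * ‖ξ‖ ^ 2 := by rw [hν, div_mul_cancel₀ _ (hK0 ξ hξ)]
  have hξ0 : ξ ≠ 0 := fun h => hK0 ξ hξ (by simp [h])
  have hν0 : ν < 0 := (hmin hξ₁K).trans_lt
    (div_neg_of_neg_of_pos (sub_neg.2 hlt) (by have := hK0 ξ₁ hξ₁K; positivity))
  have hge : ∀ η, ‖η‖ ≤ r → ν * ‖η‖ ^ 2 ≤ F η - G η := fun η hη => by
    by_cases hηρ : η ∈ ball 0 ρ
    · linarith [hball η hηρ, mul_nonpos_of_nonpos_of_nonneg hν0.le (sq_nonneg ‖η‖)]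
    · have hηK : η ∈ K := ⟨mem_closedBall_zero_iff.2 hη, hηρ⟩
      exact (le_div_iff₀ (by have := hK0 η hηK; positivity)).1 (hmin hηK)
  have hξr : ‖ξ‖ ≤ r := mem_closedBall_zero_iff.1 hξ.1
  have hξpos : 0 < ‖ξ‖ ^ 2 := by have := norm_pos_iff.2 hξ0; positivity
  refine ⟨ξ, hξ0, hξr, by linarith [mul_neg_of_neg_of_pos hν0 hξpos], fun σ => ?_⟩
  have hzero := defect_const_mul_norm_sq ν ξ σ
  rw [defect] at hzero ⊢
  rw [defect]
  linarith [hge _ ((norm_xiPlus_le ξ σ).trans hξr), hge _ ((norm_xiMinus_le ξ σ).trans hξr)]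

lemma HasSmallDefect.le_of_eventually_le (hdef : HasSmallDefect F r)
    (hF : ContinuousOn F (closedBall 0 r)) {m : ℝ} (hnear : ∀ᶠ ξ in 𝓝 0, m * ‖ξ‖ ^ 2 ≤ F ξ)
    (hξ : ‖ξ‖ ≤ r) : m * ‖ξ‖ ^ 2 ≤ F ξ := by
  by_contra! hlt
  have hξ0 : ξ ≠ 0 := by
    rintro rfl
    exact hnear.self_of_nhds.not_gt hlt
  have hξn := norm_pos_iff.2 hξ0
  set c : ℝ := (m * ‖ξ‖ ^ 2 - F ξ) / (2 * ‖ξ‖ ^ 4) with hc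
  have hc0 : 0 < c := div_pos (sub_pos.2 hlt) (mul_pos two_pos (pow_pos hξn 4))
  have hcξ : c * ‖ξ‖ ^ 4 = (m * ‖ξ‖ ^ 2 - F ξ) / 2 := by rw [hc]; field_simp
  obtain ⟨η, hη0, hηr, -, hdefect⟩ := exists_defect_le_defect hF
    (G := fun η => m * ‖η‖ ^ 2 - c * ‖η‖ ^ 4) (by fun_prop)
    (hnear.mono fun η hη => by linarith [mul_nonneg hc0.le (pow_nonneg (norm_nonneg η) 4)]) hξ
    (by linarith)
  refine hdef hη0 hηr 1 (fun _ => LinearIsometryEquiv.refl ℝ E3) (fun _ => rfl)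
    (c * ‖η‖ ^ 4 / 2) (by have := norm_pos_iff.2 hη0; positivity) fun σ => ?_
  have hquad := defect_const_mul_norm_sq m η σ
  have hquart := defect_const_mul_norm_pow_four c η σ
  have hσ := hdefect σ
  rw [Fin.sum_univ_one]
  refine le_trans ?_ (hσ.trans (le_abs_self _))
  rw [defect] at hquad hquart ⊢
  linarith

end Defect

section AxialRotations

/-- The rotation by a right angle about the first coordinate axis. -/
def quarterTurn : E3 ≃ₗᵢ[ℝ] E3 where
  toFun x := !₂[x 0, -x 2, x 1]
  invFun x := !₂[x 0, x 2, -x 1]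
  map_add' x y := by ext i; fin_cases i <;> simp [add_comm]
  map_smul' c x := by ext i; fin_cases i <;> simp
  left_inv x := by ext i; fin_cases i <;> simp
  right_inv x := by ext i; fin_cases i <;> simp
  norm_map' x := by simp [EuclideanSpace.norm_eq, Fin.sum_univ_three, add_right_comm]

lemma sum_inner_quarterTurn_sq (u σ : E3) :
    ∑ i : Fin 4, ⟪u, (quarterTurn ^ (i : ℕ)) σ⟫ ^ 2 =
      4 * σ 0 ^ 2 * u 0 ^ 2 + 2 * (‖σ‖ ^ 2 - σ 0 ^ 2) * (‖u‖ ^ 2 - u 0 ^ 2) := by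
  rw [EuclideanSpace.real_norm_sq_eq, EuclideanSpace.real_norm_sq_eq]
  simp only [Fin.sum_univ_four, Fin.coe_ofNat_eq_mod, Nat.reduceMod, pow_succ, pow_zero, one_mul,
    LinearIsometryEquiv.coe_mul, LinearIsometryEquiv.coe_one, Function.comp_apply, id,
    PiLp.inner_apply, Fin.sum_univ_three, RCLike.inner_apply, ringHom_apply, quarterTurn,
    LinearIsometryEquiv.coe_mk, LinearEquiv.coe_mk, LinearMap.coe_mk, AddHom.coe_mk,
    Matrix.cons_val_zero, Matrix.cons_val_one, Matrix.cons_val]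
  ring

/-- The four rotations about `ξ` through multiples of a right angle average every quadratic form
over the circle orthogonal to `ξ`. -/
lemma exists_axialRotations {ξ : E3} (hξ : ξ ≠ 0) :
    ∃ R : Fin 4 → E3 ≃ₗᵢ[ℝ] E3, (∀ i, R i ξ = ξ) ∧ ∀ (u : E3) (σ : sphere (0 : E3) 1),
      ‖ξ‖ ^ 2 * ∑ i, ⟪u, rotateSphere (R i) σ⟫ ^ 2 =
        4 * cosDev ξ σ ^ 2 * ⟪u, ξ⟫ ^ 2 +
          2 * (1 - cosDev ξ σ ^ 2) * (‖ξ‖ ^ 2 * ‖u‖ ^ 2 - ⟪u, ξ⟫ ^ 2) := by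
  set a : E3 := EuclideanSpace.single 0 ‖ξ‖
  have ha : ∀ x : E3, ⟪x, a⟫ = ‖ξ‖ * x 0 := fun x => by simp [a, PiLp.inner_apply]
  set Q : E3 ≃ₗᵢ[ℝ] E3 := (ℝ ∙ (ξ - a))ᗮ.reflection
  have hQ : Q ξ = a := Submodule.reflection_sub (by simp [a])
  have hfix : ∀ i : ℕ, (quarterTurn ^ i) a = a := fun i => by
    induction i with
    | zero => simp
    | succ i ih =>
      rw [pow_succ', LinearIsometryEquiv.coe_mul, Function.comp_apply, ih]
      ext j
      fin_cases j <;> simp [quarterTurn, a]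
  refine ⟨fun i => (Q.trans (quarterTurn ^ (i : ℕ))).trans Q.symm, fun i => ?_, fun u σ => ?_⟩
  · rw [LinearIsometryEquiv.trans_apply, LinearIsometryEquiv.trans_apply, hQ, hfix, ← hQ,
      Q.symm_apply_apply]
  · have hrot : ∀ x, ⟪u, Q.symm x⟫ = ⟪Q u, x⟫ := fun x => by
      rw [← Q.inner_map_map, Q.apply_symm_apply]
    have hu : ⟪u, ξ⟫ = ‖ξ‖ * (Q u) 0 := by rw [← ha, ← hQ, Q.inner_map_map]
    have hσ : cosDev ξ σ = (Q (σ : E3)) 0 := by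
      rw [cosDev, real_inner_comm, div_eq_iff (norm_ne_zero_iff.2 hξ), mul_comm, ← ha, ← hQ,
        Q.inner_map_map]
    simp only [rotateSphere, LinearIsometryEquiv.trans_apply, hrot]
    rw [sum_inner_quarterTurn_sq, hu, hσ, Q.norm_map, Q.norm_map, norm_eq_of_mem_sphere σ]
    ring

variable {μ : Measure E3} [IsProbabilityMeasure μ] {ξ : E3}

lemma defect_truncForm (M : ℝ) (ξ : E3) (σ : sphere (0 : E3) 1) :
    defect (truncForm μ M) ξ σ = (‖ξ‖ ^ 2 * truncForm μ M σ - truncForm μ M ξ) / 2 := by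
  rw [defect, xiPlus, xiMinus, truncForm_add_add_truncForm_sub, truncForm_smul, truncForm_smul]
  ring

lemma exists_sum_defect_truncForm (hξ : ξ ≠ 0) :
    ∃ R : Fin 4 → E3 ≃ₗᵢ[ℝ] E3, (∀ i, R i ξ = ξ) ∧ ∀ (M : ℝ) (σ : sphere (0 : E3) 1),
      ∑ i, defect (truncForm μ M) ξ (rotateSphere (R i) σ) =
        (1 - cosDev ξ σ ^ 2) * (‖ξ‖ ^ 2 * truncTrace μ M - 3 * truncForm μ M ξ) := by
  obtain ⟨R, hR, hsum⟩ := exists_axialRotations hξ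
  refine ⟨R, hR, fun M σ => ?_⟩
  have hint : ∀ x, IntegrableOn (fun u => ⟪u, x⟫ ^ 2) (closedBall 0 M) μ :=
    fun x => integrableOn_closedBall_inner_sq M x
  have htrace : IntegrableOn (fun u : E3 => ‖ξ‖ ^ 2 * ‖u‖ ^ 2) (closedBall 0 M) μ :=
    integrableOn_closedBall_of_continuous (by fun_prop) 0 M
  have hdiff : IntegrableOn (fun u => ‖ξ‖ ^ 2 * ‖u‖ ^ 2 - ⟪u, ξ⟫ ^ 2) (closedBall 0 M) μ :=
    htrace.sub (hint ξ)
  have hmean : ‖ξ‖ ^ 2 * ∑ i, truncForm μ M (rotateSphere (R i) σ) =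
      4 * cosDev ξ σ ^ 2 * truncForm μ M ξ +
        2 * (1 - cosDev ξ σ ^ 2) * (‖ξ‖ ^ 2 * truncTrace μ M - truncForm μ M ξ) := by
    have hintegral := integral_congr_ae (μ := μ.restrict (closedBall 0 M))
      (ae_of_all _ fun u => hsum u σ)
    rw [integral_const_mul, integral_finsetSum _ fun i _ => hint _,
      integral_add ((hint ξ).const_mul _) (hdiff.const_mul _), integral_const_mul,
      integral_const_mul, integral_sub htrace (hint ξ), integral_const_mul] at hintegral
    simp only [truncForm, truncTrace, ← Finset.mul_sum]
    linarith
  simp only [defect_truncForm, ← Finset.sum_div, Finset.sum_sub_distrib, ← Finset.mul_sum, hmean,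
    Finset.sum_const, Finset.card_univ, Fintype.card_fin, nsmul_eq_mul]
  push_cast
  ring

/-- In the plane orthogonal to `ξ` the form has trace at least `2 * m`. -/
lemma truncForm_add_le_truncTrace {M m : ℝ} (hm : ∀ η, m * ‖η‖ ^ 2 ≤ truncForm μ M η) (ξ : E3) :
    truncForm μ M ξ + 2 * m * ‖ξ‖ ^ 2 ≤ truncTrace μ M * ‖ξ‖ ^ 2 := by
  obtain rfl | hξ := eq_or_ne ξ 0
  · simpa using (truncForm_smul μ M 0 0).le
  obtain ⟨R, -, hsum⟩ := exists_sum_defect_truncForm (μ := μ) hξ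
  obtain ⟨η, hη, hperp⟩ := exists_norm_eq_one_inner_eq_zero ξ
  set σ : sphere (0 : E3) 1 := ⟨η, mem_sphere_zero_iff_norm.2 hη⟩
  have hdefect : ∀ i, (‖ξ‖ ^ 2 * m - truncForm μ M ξ) / 2 ≤
      defect (truncForm μ M) ξ (rotateSphere (R i) σ) := fun i => by
    have hσ := hm (rotateSphere (R i) σ : E3)
    rw [norm_eq_of_mem_sphere, one_pow, mul_one] at hσ
    rw [defect_truncForm]
    gcongr
  have hle := Finset.card_nsmul_le_sum Finset.univ _ _ fun i _ => hdefect i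
  have hcos : cosDev ξ σ = 0 := by rw [cosDev, hperp, zero_div]
  rw [hsum, hcos] at hle
  simp only [Finset.card_univ, Fintype.card_fin, nsmul_eq_mul] at hle
  push_cast at hle
  linarith

end AxialRotations

section Rigidity

lemma le_mul_of_forall_gt_le_mul {a V x : ℝ} (h : ∀ m > V, a ≤ m * x) : a ≤ V * x :=
  ge_of_tendsto (((continuous_mul_const x).tendsto V).mono_left nhdsWithin_le_nhds)
    (eventually_mem_nhdsWithin.mono h : ∀ᶠ m in 𝓝[>] V, a ≤ m * x)

section Form

variable {E : Type*} [NormedAddCommGroup E]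

lemma eventually_norm_le {r : ℝ} (hr : 0 < r) : ∀ᶠ ξ : E in 𝓝 0, ‖ξ‖ ≤ r :=
  (continuous_norm.tendsto' 0 0 norm_zero).eventually_le_const hr

lemma eventually_mul_norm_sq_lt (c : ℝ) {ε : ℝ} (hε : 0 < ε) :
    ∀ᶠ ξ : E in 𝓝 0, c * ‖ξ‖ ^ 2 < ε :=
  (by fun_prop : Continuous fun ξ : E => c * ‖ξ‖ ^ 2).tendsto 0 |>.eventually_lt_const (by simpa)

variable [InnerProductSpace ℝ E] [MeasurableSpace E] {μ : Measure E} {V δ : ℝ}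

lemma eventually_sub_mul_sq_le_one_sub_cosTransform
    (hV : ∀ᶠ ξ in 𝓝 0, V * ‖ξ‖ ^ 2 ≤ -log (cosTransform μ ξ)) (hδ : 0 < δ) :
    ∀ᶠ ξ in 𝓝 0, (V - δ) * ‖ξ‖ ^ 2 ≤ 1 - cosTransform μ ξ := by
  filter_upwards [hV, eventually_mul_norm_sq_lt |V| one_pos, eventually_mul_norm_sq_lt (V ^ 2) hδ]
    with ξ hle hone hsmall
  have hexp : cosTransform μ ξ ≤ exp (-(V * ‖ξ‖ ^ 2)) :=
    (le_exp_log _).trans (exp_le_exp.2 (by linarith))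
  have htaylor := (abs_le.1 (abs_exp_sub_one_sub_id_le (x := -(V * ‖ξ‖ ^ 2))
    (by rw [abs_neg, abs_mul, abs_of_nonneg (sq_nonneg ‖ξ‖)]; exact hone.le))).2
  linarith [mul_le_mul_of_nonneg_right hsmall.le (sq_nonneg ‖ξ‖)]

variable [OpensMeasurableSpace E] [ProperSpace E] [IsProbabilityMeasure μ]

lemma eventually_sub_mul_sq_le_truncForm
    (hV : ∀ᶠ ξ in 𝓝 0, V * ‖ξ‖ ^ 2 ≤ -log (cosTransform μ ξ)) (hδ : 0 < δ) :
    ∀ᶠ M : ℕ in atTop, ∀ ξ, (V - δ) * ‖ξ‖ ^ 2 ≤ truncForm μ M ξ := by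
  obtain ⟨ρ, hρ, hball⟩ := nhds_basis_closedBall.eventually_iff.1
    (eventually_sub_mul_sq_le_one_sub_cosTransform hV (half_pos hδ))
  filter_upwards [(tendsto_measureReal_compl_closedBall μ).eventually_lt_const
    (by positivity : 0 < δ / 4 * ρ ^ 2)] with M hM ξ
  obtain rfl | hξ := eq_or_ne ξ 0
  · simpa using (truncForm_smul μ M 0 0).ge
  have hξn := norm_pos_iff.2 hξ
  have hnorm : ‖(ρ / ‖ξ‖) • ξ‖ = ρ := by
    rw [norm_smul, norm_of_nonneg (by positivity), div_mul_cancel₀ _ hξn.ne']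
  have hlower := hball (mem_closedBall_zero_iff.2 hnorm.le)
  have hupper := one_sub_cosTransform_le_truncForm_add (μ := μ) M ((ρ / ‖ξ‖) • ξ)
  rw [hnorm] at hlower
  have hform : (V - δ) * ρ ^ 2 ≤ truncForm μ M ((ρ / ‖ξ‖) • ξ) := by linarith
  rw [truncForm_smul, div_pow, div_mul_eq_mul_div, le_div_iff₀ (by positivity)] at hform
  exact le_of_mul_le_mul_left (by linarith) (by positivity : 0 < ρ ^ 2)

end Form

variable {μ : Measure E3} [IsProbabilityMeasure μ] {F q : E3 → ℝ} {r V δ : ℝ}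

lemma one_sub_cosTransform_le_of_truncTrace_le
    (hV : ∀ᶠ ξ in 𝓝 0, V * ‖ξ‖ ^ 2 ≤ -log (cosTransform μ ξ))
    (htrace : ∀ M : ℕ, truncTrace μ M ≤ 3 * V) (ξ : E3) :
    1 - cosTransform μ ξ ≤ V * ‖ξ‖ ^ 2 := by
  refine le_mul_of_forall_gt_le_mul fun m hm => ?_
  have htail := ((tendsto_measureReal_compl_closedBall μ).const_mul 2).const_add (m * ‖ξ‖ ^ 2)
  rw [mul_zero, add_zero] at htail
  refine ge_of_tendsto htail ?_
  filter_upwards [eventually_sub_mul_sq_le_truncForm hV (half_pos (sub_pos.2 hm))] with M hM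
  have hform := truncForm_add_le_truncTrace hM ξ
  linarith [one_sub_cosTransform_le_truncForm_add (μ := μ) M ξ,
    mul_le_mul_of_nonneg_right (htrace M) (sq_nonneg ‖ξ‖)]

lemma HasSmallDefect.exists_sharp_quadratic_bound (hdef : HasSmallDefect F r)
    (hF : ContinuousOn F (closedBall 0 r)) (hr : 0 < r) (hF0 : ∀ ξ, ‖ξ‖ ≤ r → 0 ≤ F ξ) :
    ∃ V, 0 ≤ V ∧ (∀ ξ, ‖ξ‖ ≤ r → V * ‖ξ‖ ^ 2 ≤ F ξ) ∧
      ∀ m > V, ∃ᶠ ξ in 𝓝 0, F ξ < m * ‖ξ‖ ^ 2 := by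
  set S : Set ℝ := {m | ∀ ξ, ‖ξ‖ ≤ r → m * ‖ξ‖ ^ 2 ≤ F ξ}
  have hzero : 0 ∈ S := fun ξ hξ => by simpa using hF0 ξ hξ
  have hS : ∀ m ∈ S, ∀ ξ ≠ 0, ‖ξ‖ ≤ r → m ≤ F ξ / ‖ξ‖ ^ 2 := fun m hm ξ hξ hξr =>
    (le_div_iff₀ (pow_pos (norm_pos_iff.2 hξ) 2)).2 (hm ξ hξr)
  obtain ⟨η, hη⟩ := exists_norm_eq E3 hr.le
  have hη0 : η ≠ 0 := norm_pos_iff.1 (hη.symm ▸ hr)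
  have hbdd : BddAbove S := ⟨_, fun m hm => hS m hm η hη0 hη.le⟩
  refine ⟨sSup S, le_csSup hbdd hzero, fun ξ hξ => ?_, fun m hm hev => ?_⟩
  · obtain rfl | hξ0 := eq_or_ne ξ 0
    · simpa using hF0 0 hξ
    · exact (le_div_iff₀ (pow_pos (norm_pos_iff.2 hξ0) 2)).1
        (csSup_le ⟨0, hzero⟩ fun m hm => hS m hm ξ hξ0 hξ)
  · exact hm.not_ge (le_csSup hbdd fun ξ hξ =>
      hdef.le_of_eventually_le hF (hev.mono fun ξ => le_of_not_gt) hξ)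

lemma HasSmallDefect.neg_log_cosTransform_le
    (hdef : HasSmallDefect (fun ξ => -log (cosTransform μ ξ)) r)
    (hF : ContinuousOn (fun ξ => -log (cosTransform μ ξ)) (closedBall 0 r)) (hV0 : 0 ≤ V)
    (hV : ∀ ξ, 1 - cosTransform μ ξ ≤ V * ‖ξ‖ ^ 2) {ξ : E3} (hξ : ‖ξ‖ ≤ r) :
    -log (cosTransform μ ξ) ≤ V * ‖ξ‖ ^ 2 := by
  refine le_mul_of_forall_gt_le_mul fun m hm => ?_
  have hcos : IsCosTransform (cosTransform μ) := ⟨μ, inferInstance, rfl⟩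
  have hlim : Tendsto (fun ξ => m * cosTransform μ ξ) (𝓝 0) (𝓝 m) :=
    (continuous_const.mul hcos.continuous).tendsto' 0 m (by simp [hcos.map_zero])
  refine neg_le_neg_iff.1 ((hdef.neg.le_of_eventually_le hF.neg (m := -m) ?_ hξ).trans_eq' ?_)
  · filter_upwards [hlim.eventually_const_lt hm] with η hη
    have hpos : 0 < cosTransform μ η := pos_of_mul_pos_right (hV0.trans_lt hη) (hV0.trans hm.le)
    have hlog := one_sub_inv_le_log_of_pos hpos
    have hinv : (cosTransform μ η)⁻¹ ≤ 1 + m * ‖η‖ ^ 2 := by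
      rw [inv_le_iff_one_le_mul₀ hpos]
      linarith [hV η, mul_le_mul_of_nonneg_right hη.le (sq_nonneg ‖η‖)]
    linarith
  · ring

lemma eventually_average_add_le {B K : ℝ} (hδ : 0 < δ) (hV : ∀ᶠ ξ in 𝓝 0, V * ‖ξ‖ ^ 2 ≤ F ξ)
    (hq : ∀ᶠ ξ in 𝓝 0, q ξ - B * ‖ξ‖ ^ 4 ≤ F ξ) :
    ∀ᶠ ξ in 𝓝 0, (V / 2 - δ) * ‖ξ‖ ^ 2 + q ξ / 2 + K * ‖ξ‖ ^ 4 ≤ F ξ := by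
  filter_upwards [hV, hq, eventually_mul_norm_sq_lt (B / 2 + K) hδ] with ξ hVξ hqξ hsmall
  linarith [mul_le_mul_of_nonneg_right hsmall.le (sq_nonneg ‖ξ‖)]

/-- The barrier `(V / 2 - δ) * ‖ξ‖ ^ 2 + q ξ / 2 + K * ‖ξ‖ ^ 4` lies below `F` near the origin, and
above it at a point where `F` nearly attains its sharp quadratic lower bound. -/
lemma exists_defect_form_le_defect {B : ℝ} (hF : ContinuousOn F (closedBall 0 r)) (hr : 0 < r)
    (hV : ∀ ξ, ‖ξ‖ ≤ r → V * ‖ξ‖ ^ 2 ≤ F ξ) (hsharp : ∀ m > V, ∃ᶠ ξ in 𝓝 0, F ξ < m * ‖ξ‖ ^ 2)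
    (hq : Continuous q) (hqV : ∀ ξ, (V - δ) * ‖ξ‖ ^ 2 ≤ q ξ) (hB : 0 ≤ B)
    (hqF : ∀ ξ, ‖ξ‖ ≤ r → q ξ - B * ‖ξ‖ ^ 4 ≤ F ξ) (hδ : 0 < δ) :
    ∃ K, ∃ ξ ≠ 0, ‖ξ‖ ≤ r ∧ K * ‖ξ‖ ^ 2 ≤ 3 * δ ∧ q ξ ≤ (V + 6 * δ) * ‖ξ‖ ^ 2 ∧
      ∀ σ, defect q ξ σ / 2 - K * ‖ξ‖ ^ 4 / 2 * (1 - cosDev ξ σ ^ 2) ≤ defect F ξ σ := by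
  have hnear : ∀ᶠ ξ : E3 in 𝓝 0, ‖ξ‖ ≤ r := eventually_norm_le hr
  obtain ⟨e, ⟨heF, her⟩, heB⟩ := (((hsharp (V + δ) (by linarith)).and_eventually
    hnear).and_eventually (eventually_mul_norm_sq_lt B hδ)).exists
  have he0 : 0 < ‖e‖ := (norm_nonneg e).lt_of_ne' fun h => by
    have := hV e her
    simp only [h, ne_eq, OfNat.ofNat_ne_zero, not_false_eq_true, zero_pow, mul_zero] at this heF
    exact this.not_gt heF
  set K : ℝ := 3 * δ / ‖e‖ ^ 2
  have hK0 : 0 < K := by positivity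
  have hKe : K * ‖e‖ ^ 2 = 3 * δ := div_mul_cancel₀ _ (by positivity)
  obtain ⟨ξ, hξ0, hξe, hlt, hdefect⟩ := exists_defect_le_defect
    (hF.mono (closedBall_subset_closedBall her))
    (G := fun ξ => (V / 2 - δ) * ‖ξ‖ ^ 2 + q ξ / 2 + K * ‖ξ‖ ^ 4) (by fun_prop)
    (eventually_average_add_le hδ (hnear.mono hV) (hnear.mono hqF)) le_rfl
    (by linarith [hqV e, congrArg (· * ‖e‖ ^ 2) hKe, mul_pos hδ (pow_pos he0 2)])
  have hξr := hξe.trans her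
  have hsq : ‖ξ‖ ^ 2 ≤ ‖e‖ ^ 2 := by gcongr
  have hKξ : K * ‖ξ‖ ^ 2 ≤ 3 * δ := (mul_le_mul_of_nonneg_left hsq hK0.le).trans_eq hKe
  have hBξ : B * ‖ξ‖ ^ 2 ≤ δ := (mul_le_mul_of_nonneg_left hsq hB).trans heB.le
  refine ⟨K, ξ, hξ0, hξr, hKξ, ?_, fun σ => (hdefect σ).trans_eq' ?_⟩
  · linarith [hqF ξ hξr, mul_le_mul_of_nonneg_right hKξ (sq_nonneg ‖ξ‖),
      mul_le_mul_of_nonneg_right hBξ (sq_nonneg ‖ξ‖)]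
  · have hquad := defect_const_mul_norm_sq (V / 2 - δ) ξ σ
    have hquart := defect_const_mul_norm_pow_four K ξ σ
    rw [defect] at hquad hquart ⊢
    rw [defect]
    linarith

lemma HasSmallDefect.truncTrace_le
    (hdef : HasSmallDefect (fun ξ => -log (cosTransform μ ξ)) r)
    (hF : ContinuousOn (fun ξ => -log (cosTransform μ ξ)) (closedBall 0 r)) (hr : 0 < r)
    (hpos : ∀ ξ, ‖ξ‖ ≤ r → 0 < cosTransform μ ξ)
    (hV : ∀ ξ, ‖ξ‖ ≤ r → V * ‖ξ‖ ^ 2 ≤ -log (cosTransform μ ξ))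
    (hsharp : ∀ m > V, ∃ᶠ ξ in 𝓝 0, -log (cosTransform μ ξ) < m * ‖ξ‖ ^ 2) (M₀ : ℕ) :
    truncTrace μ M₀ ≤ 3 * V := by
  by_contra! hlt
  set δ : ℝ := (truncTrace μ M₀ - 3 * V) / 32 with hδ_def
  have hδ : 0 < δ := by linarith
  have hnear : ∀ᶠ ξ : E3 in 𝓝 0, ‖ξ‖ ≤ r := eventually_norm_le hr
  obtain ⟨M, hM, hM₀⟩ := ((eventually_sub_mul_sq_le_truncForm (hnear.mono hV) hδ).and
    (eventually_ge_atTop M₀)).exists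
  have htrace : 3 * V + 32 * δ ≤ truncTrace μ M := by
    linarith [truncTrace_mono (μ := μ) (Nat.cast_le (α := ℝ).2 hM₀)]
  obtain ⟨K, ξ, hξ0, hξr, hKξ, hqξ, hdefect⟩ := exists_defect_form_le_defect hF hr hV hsharp
    (continuous_truncForm M) hM (by positivity : (0 : ℝ) ≤ M ^ 4)
    (fun ξ hξ => (truncForm_sub_le_one_sub_cosTransform M ξ).trans
      (by linarith [log_le_sub_one_of_pos (hpos ξ hξ)])) hδ
  obtain ⟨R, hR, hsum⟩ := exists_sum_defect_truncForm (μ := μ) hξ0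
  have hcos : ∀ i σ, cosDev ξ (rotateSphere (R i) σ) = cosDev ξ σ := fun i σ => by
    conv_lhs => rw [← hR i]
    exact cosDev_rotateSphere (R i) ξ σ
  have hsq : 0 < ‖ξ‖ ^ 2 := pow_pos (norm_pos_iff.2 hξ0) 2
  refine hdef hξ0 hξr 4 R hR (δ * ‖ξ‖ ^ 2) (mul_pos hδ hsq) fun σ => ?_
  calc δ * ‖ξ‖ ^ 2 * (1 - cosDev ξ σ ^ 2)
      ≤ ((‖ξ‖ ^ 2 * truncTrace μ M - 3 * truncForm μ M ξ) / 2 - 2 * K * ‖ξ‖ ^ 4) *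
          (1 - cosDev ξ σ ^ 2) := by
        refine mul_le_mul_of_nonneg_right ?_ (sub_nonneg.2 (cosDev_sq_le_one ξ σ))
        linarith [mul_le_mul_of_nonneg_right htrace hsq.le,
          mul_le_mul_of_nonneg_right hKξ hsq.le]
    _ = ∑ i, (defect (truncForm μ M) ξ (rotateSphere (R i) σ) / 2 -
          K * ‖ξ‖ ^ 4 / 2 * (1 - cosDev ξ (rotateSphere (R i) σ) ^ 2)) := by
        simp only [hcos, Finset.sum_sub_distrib, ← Finset.sum_div, hsum, Finset.sum_const,
          Finset.card_univ, Fintype.card_fin, nsmul_eq_mul]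
        push_cast
        ring
    _ ≤ _ := Finset.sum_le_sum fun i _ => (hdefect _).trans (le_abs_self _)

lemma HasSmallDefect.exists_neg_log_cosTransform_eq
    (hdef : HasSmallDefect (fun ξ => -log (cosTransform μ ξ)) r) (hr : 0 < r)
    (hpos : ∀ ξ, ‖ξ‖ ≤ r → 0 < cosTransform μ ξ) :
    ∃ V, ∀ ξ, ‖ξ‖ ≤ r → -log (cosTransform μ ξ) = V * ‖ξ‖ ^ 2 := by
  have hcos : IsCosTransform (cosTransform μ) := ⟨μ, inferInstance, rfl⟩
  have hF : ContinuousOn (fun ξ => -log (cosTransform μ ξ)) (closedBall 0 r) :=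
    (hcos.continuous.continuousOn.log fun ξ hξ => (hpos ξ (mem_closedBall_zero_iff.1 hξ)).ne').neg
  obtain ⟨V, hV0, hV, hsharp⟩ := hdef.exists_sharp_quadratic_bound hF hr fun ξ hξ =>
    neg_nonneg.2 (log_nonpos (hpos ξ hξ).le (hcos.le_one ξ))
  have hnear : ∀ᶠ ξ : E3 in 𝓝 0, V * ‖ξ‖ ^ 2 ≤ -log (cosTransform μ ξ) :=
    (eventually_norm_le hr).mono hV
  have hupper := one_sub_cosTransform_le_of_truncTrace_le hnear
    (hdef.truncTrace_le hF hr hpos hV hsharp)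
  exact ⟨V, fun ξ hξ => (hdef.neg_log_cosTransform_le hF hV0 hupper hξ).antisymm (hV ξ hξ)⟩

end Rigidity

section Nondegeneracy

variable {b : ℝ → ℝ} {s k c₀ r : ℝ} {f : E3 → ℝ} {φ : ℝ → E3 → ℝ} {τ T : ℝ}

lemma realCollisionIntegrand_eq_zero_of_neg_log_eq {V : ℝ} (hpos : ∀ ξ, ‖ξ‖ ≤ r → 0 < f ξ)
    (hlog : ∀ ξ, ‖ξ‖ ≤ r → -log (f ξ) = V * ‖ξ‖ ^ 2) {ξ : E3} (hξ : ‖ξ‖ ≤ r)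
    (σ : sphere (0 : E3) 1) : realCollisionIntegrand b f ξ σ = 0 := by
  have hgauss : ∀ η, ‖η‖ ≤ r → f η = exp (-(V * ‖η‖ ^ 2)) := fun η hη => by
    rw [← hlog η hη, neg_neg, exp_log (hpos η hη)]
  rw [realCollisionIntegrand, hgauss _ ((norm_xiPlus_le ξ σ).trans hξ),
    hgauss _ ((norm_xiMinus_le ξ σ).trans hξ), hgauss ξ hξ, ← exp_add, norm_xiPlus_sq,
    norm_xiMinus_sq]
  ring_nf

lemma integral_realCollisionIntegrand_eq_zero (hbm : Measurable b) (hb : ∀ x, 0 ≤ b x)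
    (hnot : ¬ FiniteMomentumTransfer b) (hf : IsCosTransform f) (hr : 0 < r)
    (hhalf : ∀ ξ, ‖ξ‖ ≤ r → 1 / 2 ≤ f ξ)
    (hint : ∀ ξ, Integrable (realCollisionIntegrand b f ξ) sphμ) {ξ : E3} (hξ : ‖ξ‖ ≤ r) :
    ∫ σ, realCollisionIntegrand b f ξ σ ∂sphμ = 0 := by
  have hpos : ∀ ξ, ‖ξ‖ ≤ r → 0 < f ξ := fun ξ hξ => one_half_pos.trans_le (hhalf ξ hξ)
  have hdef := hasSmallDefect_neg_log hbm hb hnot hhalf hf.le_one hint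
  obtain ⟨V, hV⟩ : ∃ V, ∀ ξ, ‖ξ‖ ≤ r → -log (f ξ) = V * ‖ξ‖ ^ 2 := by
    obtain ⟨μ, hμ, rfl⟩ := hf
    exact hdef.exists_neg_log_cosTransform_eq hr hpos
  simp only [realCollisionIntegrand_eq_zero_of_neg_log_eq hpos hV hξ, integral_zero]

lemma IsSubsolution.exists_lt_one_of_not_finiteMomentumTransfer (h : IsSubsolution b φ)
    (hbm : Measurable b) (hb : ∀ x, 0 ≤ b x) (hk : KernelLowerBound b s k c₀)
    (hnot : ¬ FiniteMomentumTransfer b) (hτ : 0 < τ) (hτT : τ ≤ T) (hlt : ∃ ξ, φ τ ξ < 1) :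
    ∃ ξ, φ T ξ < 1 := by
  obtain ⟨r, hr, hhalf⟩ := h.exists_half_le hτ (T := T)
  obtain ⟨ξ, hξ⟩ := exists_norm_eq E3 hr.le
  have hderiv : ∀ t ∈ Icc τ T, ∃ d ≤ 0, HasDerivAt (fun t => φ t ξ) d t := fun t ht => by
    have ht0 := hτ.trans_le ht.1
    obtain ⟨d, hd, hφ⟩ := h.deriv_le t ht0 ξ
    rw [integral_realCollisionIntegrand_eq_zero hbm hb hnot (h.isCosTransform t ht0.le) hr
      (hhalf t ht) (h.integrable t ht0.le) hξ.le] at hd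
    exact ⟨d, hd, hφ⟩
  have hanti : AntitoneOn (fun t => φ t ξ) (Icc τ T) := by
    refine antitoneOn_of_deriv_nonpos (convex_Icc τ T) (fun t ht => ?_) (fun t ht => ?_)
      fun t ht => ?_
    · obtain ⟨d, -, hφ⟩ := hderiv t ht
      exact hφ.continuousAt.continuousWithinAt
    · obtain ⟨d, -, hφ⟩ := hderiv t (interior_subset ht)
      exact hφ.differentiableAt.differentiableWithinAt
    · obtain ⟨d, hd, hφ⟩ := hderiv t (interior_subset ht)
      exact hφ.deriv.trans_le hd
  exact ⟨ξ, (hanti (left_mem_Icc.2 hτT) (right_mem_Icc.2 hτT) hτT).trans_lt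
    (h.lt_one hb hk hτ hlt (norm_pos_iff.1 (hξ.symm ▸ hr)))⟩

lemma IsSubsolution.exists_lt_one (h : IsSubsolution b φ) (hbm : Measurable b)
    (hb : ∀ x, 0 ≤ b x) (hk : KernelLowerBound b s k c₀) (hτ : 0 < τ) (hτT : τ ≤ T)
    (hlt : ∃ ξ, φ τ ξ < 1) : ∃ ξ, φ T ξ < 1 := by
  by_cases hfin : FiniteMomentumTransfer b
  · exact h.exists_lt_one_of_finiteMomentumTransfer hbm hb hk hfin hτ hτT hlt
  · exact h.exists_lt_one_of_not_finiteMomentumTransfer hbm hb hk hfin hτ hτT hlt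

end Nondegeneracy

section Integrability

variable {a s : ℝ}

lemma exists_rpow_le_mul_exp (ha : 0 < a) (hs : 0 < s) (p : ℝ) :
    ∃ C, ∀ w ≥ 1, w ^ p ≤ C * exp (a * w ^ s) := by
  obtain ⟨n, hn⟩ := exists_nat_ge (p / s)
  refine ⟨n.factorial / a ^ n, fun w hw => ?_⟩
  have hw0 : 0 < w := one_pos.trans_le hw
  calc w ^ p ≤ w ^ (s * n) := rpow_le_rpow_of_exponent_le hw ((div_le_iff₀' hs).1 hn)
    _ = (w ^ s) ^ n := by rw [rpow_mul hw0.le, rpow_natCast]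
    _ = n.factorial / a ^ n * ((a * w ^ s) ^ n / n.factorial) := by
      rw [mul_pow]
      field_simp
    _ ≤ n.factorial / a ^ n * exp (a * w ^ s) := by
      gcongr
      exact pow_div_factorial_le_exp _ (by positivity) n

variable {E : Type*} [NormedAddCommGroup E] [NormedSpace ℝ E] [FiniteDimensional ℝ E]
  [MeasurableSpace E] [BorelSpace E]

lemma integrable_pow_mul_exp_neg_smoothingWeight (ν : Measure E) [ν.IsAddHaarMeasure]
    (ha : 0 < a) (hs : 0 < s) (N : ℕ) :
    Integrable (fun ξ => (1 + ‖ξ‖ ^ 2) ^ N * exp (-(a * smoothingWeight s (‖ξ‖ ^ 2)))) ν := by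
  set d : ℝ := Module.finrank ℝ E + 1
  obtain ⟨C, hC⟩ := exists_rpow_le_mul_exp ha hs (N + d / 2)
  have hint : Integrable (fun ξ : E => C * exp a * (1 + ‖ξ‖ ^ 2) ^ (-d / 2)) ν :=
    (integrable_rpow_neg_one_add_norm_sq (lt_add_one _)).const_mul _
  refine hint.mono' (Continuous.aestronglyMeasurable ?_) (ae_of_all _ fun ξ => ?_)
  · have hweight := (continuous_smoothingWeight hs.le).comp
      (by fun_prop : Continuous fun ξ : E => ‖ξ‖ ^ 2)
    fun_prop
  set w : ℝ := 1 + ‖ξ‖ ^ 2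
  have hw : 1 ≤ w := le_add_of_nonneg_right (sq_nonneg ‖ξ‖)
  have hw0 : 0 < w := one_pos.trans_le hw
  rw [norm_of_nonneg (by positivity)]
  calc w ^ N * exp (-(a * (w ^ s - 1)))
      = w ^ (N + d / 2) * w ^ (-d / 2) * (exp a * exp (-(a * w ^ s))) := by
        rw [← rpow_add hw0, ← exp_add, ← rpow_natCast]
        ring_nf
    _ ≤ C * exp (a * w ^ s) * w ^ (-d / 2) * (exp a * exp (-(a * w ^ s))) := by
        gcongr
        exact hC w hw
    _ = C * exp a * w ^ (-d / 2) := by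
        rw [exp_neg]
        field_simp

end Integrability

lemma IsSubsolution.lintegral_pow_mul_lt_top {b : ℝ → ℝ} {s k c₀ : ℝ} {φ : ℝ → E3 → ℝ}
    (h : IsSubsolution b φ) (hb : ∀ x, 0 ≤ b x) (hs : 0 < s) (hk : KernelLowerBound b s k c₀)
    {T : ℝ} (hT : 0 < T) (hlt : ∃ ξ, φ T ξ < 1) (N : ℕ) :
    ∫⁻ ξ : E3, ENNReal.ofReal ((1 + ‖ξ‖ ^ 2) ^ N * φ T ξ) < ⊤ := by
  have hs' : 0 < min s 1 := lt_min hs one_pos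
  obtain ⟨a, ha, hdecay⟩ := h.exists_le_exp_smoothingWeight hb
    (hk.of_exponent_le (min_le_left s 1)) hs' (min_le_right s 1) hT hlt
  refine lt_of_le_of_lt (lintegral_mono fun ξ => ENNReal.ofReal_le_ofReal ?_)
    (integrable_pow_mul_exp_neg_smoothingWeight volume ha hs' N).lintegral_lt_top
  exact mul_le_mul_of_nonneg_left (hdecay ξ) (by positivity)

lemma IsBobylevSolution.exists_norm_sq_lt_one {b : ℝ → ℝ} {ψ : ℝ → E3 → ℂ} {ψ₀ : E3 → ℂ}
    (hψ : IsBobylevSolution b ψ ψ₀) (hψ₀ : ∃ ξ, ‖ψ₀ ξ‖ ^ 2 < 1) {T : ℝ} (hT : 0 < T) :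
    ∃ τ ∈ Ioo 0 T, ∃ ξ, ‖ψ τ ξ‖ ^ 2 < 1 := by
  obtain ⟨ξ, hξ⟩ := hψ₀
  have hcont : ContinuousWithinAt (fun t => ‖ψ t ξ‖ ^ 2) (Ioi 0) 0 :=
    (((hψ.eq 0 le_rfl ξ).continuousWithinAt.norm).pow 2).mono Ioi_subset_Ici_self
  obtain ⟨τ, hlt, hτ⟩ := ((hcont.eventually_lt_const
    (by simpa only [hψ.init] using hξ)).and (Ioo_mem_nhdsGT hT)).exists
  exact ⟨τ, hτ, ξ, hlt⟩

theorem villani_smoothing_global_first_moment_general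
    (s K : ℝ) (hs0 : 0 < s) (hK : 0 < K)
    (b : ℝ → ℝ) (hb_meas : Measurable b) (hb_nonneg : ∀ x, 0 ≤ b x)
    (hb_sing : KernelSingular b s K)
    (F₀ : Measure E3) [IsProbabilityMeasure F₀]
    (hnotdirac : ∀ v₀ : E3, F₀ {v₀} ≠ 1)
    (ψ₀ : E3 → ℂ) (hψ₀ : ψ₀ = charFn F₀)
    (ψ : ℝ → E3 → ℂ) (hψ : IsBobylevSolution b ψ ψ₀) :
    ∀ t > (0:ℝ), ∀ N : ℕ,
      (∫⁻ ξ : E3, ENNReal.ofReal ((1 + ‖ξ‖ ^ 2) ^ N * ‖ψ t ξ‖ ^ 2)) < ⊤ := by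
  intro t ht
  obtain ⟨k, c₀, hk⟩ := hb_sing.exists_kernelLowerBound hs0 hK
  have hsub := hψ.isSubsolution_norm_sq hb_meas hb_nonneg
  obtain ⟨τ, ⟨hτ, hτt⟩, hnear⟩ :=
    hψ.exists_norm_sq_lt_one (hψ₀ ▸ exists_norm_charFn_sq_lt_one F₀ hnotdirac) ht
  have hlt := hsub.exists_lt_one hb_meas hb_nonneg hk hτ hτt.le hnear
  exact hsub.lintegral_pow_mul_lt_top hb_nonneg hs0 hk ht hlt

/-- global-in-time H^∞ smoothing for non-Dirac initial data with
finite first moment, in the mild singularity case `0 < s < 1/2`. -/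
theorem villani_smoothing_global_first_moment
    (s K : ℝ) (hs0 : 0 < s) (hs1 : s < 1/2) (hK : 0 < K)
    (b : ℝ → ℝ) (hb_meas : Measurable b) (hb_nonneg : ∀ x, 0 ≤ b x)
    (hb_sing : KernelSingular b s K)
    (F₀ : Measure E3) [IsProbabilityMeasure F₀]
    (hnotdirac : ∀ v₀ : E3, F₀ {v₀} ≠ 1)
    (hmom1 : (∫⁻ v, ENNReal.ofReal ‖v‖ ∂F₀) < ⊤)
    (ψ₀ : E3 → ℂ) (hψ₀ : ψ₀ = charFn F₀)
    (ψ : ℝ → E3 → ℂ) (hψ : IsBobylevSolution b ψ ψ₀)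
    (hψK : ∀ t ≥ 0, KBdd 1 (ψ t)) (hψcont : KContinuous 1 ψ) :
    ∀ t > (0:ℝ), ∀ N : ℕ,
      (∫⁻ ξ : E3, ENNReal.ofReal ((1 + ‖ξ‖ ^ 2) ^ N * ‖ψ t ξ‖ ^ 2)) < ⊤ :=
  villani_smoothing_global_first_moment_general s K hs0 hK b hb_meas hb_nonneg hb_sing F₀
    hnotdirac ψ₀ hψ₀ ψ hψ
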